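/- arXiv:1507.05103 — 10 statements merged into one kernel-verified Lean document; each statement's English description precedes it below -/
import Mathlib

section
/- The number of edges of the hierarchical graph H_{n,k} equals (3/2)n^{k+1} − (n−1)^{k+1} − 2n^k − n/2 + 1; equivalently, twice the number of edges of H_{n,k} equals 3n^{k+1} − 2(n−1)^{k+1} − 4n^k − n + 2. -/
/-!
The proof counts ordered adjacent pairs (darts), of which there are twice as many as edges,
by induction on the word length. Splitting off the first letter, `H_{n,k+2}` consists of `n` copies
of `H_{n,k+1}` together with two families of edges between copies: the root `0…0` is joined to the
`(n-1)^{k+2}` words without zero letter, and the words `a0…0`, `a ≠ 0`, form a complete graph on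
`n-1` vertices (`hierGraph_adj_cons`). The number `D_k` of darts therefore satisfies
`D_{k+2} = n D_{k+1} + 2(n-1)^{k+2} + (n-1)(n-2)` (`dartCount_succ`), with `D_1 = n(n-1)` since
`H_{n,1}` is complete, and the closed form solves this recurrence.
-/

/-- Rule (1): the two vertices agree on the first `k-1` coordinates and differ
(hence differ in the last coordinate). -/
def rule1 {n k : ℕ} (x y : Fin k → ZMod n) : Prop :=
  x ≠ y ∧ ∀ j : Fin k, (j : ℕ) + 1 < k → x j = y j

/-- Rule (2): `x = x_1…x_i 0…0` and `y = x_1…x_i x_{i+1}…x_k` with `x_j ≠ 0` for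
`i+1 ≤ j ≤ k`, where `0 ≤ i ≤ k-2` (`i` is the length of the shared prefix,
0-indexed coordinates `≥ i` are zero on the `x` side and nonzero on the `y` side). -/
def rule2 {n k : ℕ} (x y : Fin k → ZMod n) : Prop :=
  ∃ i : ℕ, i + 2 ≤ k ∧ (∀ j : Fin k, (j : ℕ) < i → x j = y j) ∧
    (∀ j : Fin k, i ≤ (j : ℕ) → x j = 0) ∧ (∀ j : Fin k, i ≤ (j : ℕ) → y j ≠ 0)

/-- Rule (3): `x = x_1…x_{i-1} x_i 0…0` and `y = x_1…x_{i-1} y_i 0…0` with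
`x_i, y_i ≠ 0`, `x_i ≠ y_i` and `1 ≤ i ≤ k-1` (here `p` is the 0-indexed
position `i-1`, so `p ≤ k-2`). -/
def rule3 {n k : ℕ} (x y : Fin k → ZMod n) : Prop :=
  ∃ p : Fin k, (p : ℕ) + 2 ≤ k ∧ (∀ j : Fin k, j < p → x j = y j) ∧
    x p ≠ 0 ∧ y p ≠ 0 ∧ x p ≠ y p ∧ (∀ j : Fin k, p < j → x j = 0 ∧ y j = 0)

/-- The hierarchical graph `H_{n,k}` on the vertex set `(Z_n)^k`, whose adjacency
is given exactly by the three rules above. -/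
def hierGraph (n k : ℕ) : SimpleGraph (Fin k → ZMod n) :=
  SimpleGraph.fromRel (fun x y => rule1 x y ∨ rule2 x y ∨ rule3 x y)

/-- The root vertex `00…0` of `H_{n,k}`. -/
def hierRoot (n k : ℕ) : Fin k → ZMod n := fun _ => 0

/-- The set of peripheral vertices of `H_{n,k}`: those all of whose coordinates
are nonzero. -/
def peripheral (n k : ℕ) : Set (Fin k → ZMod n) := {v | ∀ j, v j ≠ 0}

/-- The minimum graph distance from a vertex to a set of vertices. -/
noncomputable def distToSet {V : Type*} (G : SimpleGraph V) (v : V) (S : Set V) : ℕ :=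
  sInf (G.dist v '' S)

/-- The eccentricity of a vertex: the maximum graph distance from it to any vertex. -/
noncomputable def eccentricity {V : Type*} (G : SimpleGraph V) (v : V) : ℕ :=
  sSup (Set.range (G.dist v))

/-- The radius of a graph: the minimum eccentricity over all vertices. -/
noncomputable def graphRadius {V : Type*} (G : SimpleGraph V) : ℕ :=
  sInf (Set.range (eccentricity G))

/-- The degree of a vertex, as the number of its neighbors. -/
noncomputable def vdeg {V : Type*} (G : SimpleGraph V) (v : V) : ℕ :=
  (G.neighborSet v).ncard

/-- `ε_v`: the number of edges of the graph both of whose endpoints are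
neighbors of `v`. -/
noncomputable def localEdges {V : Type*} (G : SimpleGraph V) (v : V) : ℕ :=
  {e : Sym2 V | e ∈ G.edgeSet ∧ ∀ w ∈ e, G.Adj v w}.ncard

/-- The clustering coefficient `c(v) = 2 ε_v / (δ_v (δ_v - 1))` of a vertex `v`. -/
noncomputable def clustering {V : Type*} (G : SimpleGraph V) (v : V) : ℚ :=
  (2 * (localEdges G v : ℚ)) / ((vdeg G v : ℚ) * ((vdeg G v : ℚ) - 1))

/-- The vertex `z^{01} = 0101…` (1-indexed: 0 at odd positions, 1 at even). -/
def z01 (n k : ℕ) : Fin k → ZMod n := fun j => if (j : ℕ) % 2 = 0 then 0 else 1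

/-- The vertex `z^{10} = 1010…` (1-indexed: 1 at odd positions, 0 at even). -/
def z10 (n k : ℕ) : Fin k → ZMod n := fun j => if (j : ℕ) % 2 = 0 then 1 else 0

open Classical in
/-- The number of ordered pairs of adjacent vertices of `H_{n,k}`, as an integer. -/
noncomputable def dartCount (n k : ℕ) [NeZero n] : ℤ :=
  ∑ x : Fin k → ZMod n, ∑ y : Fin k → ZMod n, if (hierGraph n k).Adj x y then 1 else 0

theorem dartCount_eq (n k : ℕ) [NeZero n] :
    dartCount n k = 2 * ((hierGraph n k).edgeSet.ncard : ℤ) := by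
  classical
  have h := (hierGraph n k).sum_degrees_eq_twice_card_edges
  have h2 : (hierGraph n k).edgeSet.ncard = (hierGraph n k).edgeFinset.card := by
    rw [← SimpleGraph.coe_edgeFinset, Set.ncard_coe_finset]
  rw [h2, dartCount]
  have h3 : ∀ x, (∑ y, if (hierGraph n k).Adj x y then (1 : ℤ) else 0)
      = ((hierGraph n k).degree x : ℤ) := by
    intro x
    rw [Finset.sum_boole, ← SimpleGraph.card_neighborFinset_eq_degree,
      SimpleGraph.neighborFinset_eq_filter]
  simp only [h3]
  exact_mod_cast h

section Recursion

variable {n k : ℕ} (a b : ZMod n) (x y : Fin (k + 1) → ZMod n)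

theorem rule1_cons :
    rule1 (Fin.cons a x : Fin (k + 2) → ZMod n) (Fin.cons b y) ↔ a = b ∧ rule1 x y := by
  simp only [rule1, Fin.forall_fin_succ (n := k + 1), Fin.cons_zero, Fin.cons_succ, Fin.val_succ,
    Fin.val_zero, ne_eq, Fin.cons_inj, Nat.add_lt_add_iff_right]
  have : 0 < k + 1 := k.succ_pos
  tauto

theorem rule2_cons :
    rule2 (Fin.cons a x : Fin (k + 2) → ZMod n) (Fin.cons b y) ↔
      (a = b ∧ rule2 x y) ∨ ((a = 0 ∧ x = 0) ∧ (b ≠ 0 ∧ ∀ j, y j ≠ 0)) := by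
  simp only [rule2, Fin.forall_fin_succ (n := k + 1), Fin.cons_zero, Fin.cons_succ, Fin.val_succ,
    Fin.val_zero]
  constructor
  · rintro ⟨i, hi, h1, h2, h3⟩
    rcases i with _ | i
    · exact Or.inr ⟨⟨h2.1 le_rfl, funext fun j => h2.2 j (Nat.zero_le _)⟩,
        h3.1 le_rfl, fun j => h3.2 j (Nat.zero_le _)⟩
    · exact Or.inl ⟨h1.1 (by omega), i, by omega, fun j hj => h1.2 j (by omega),
        fun j hj => h2.2 j (by omega), fun j hj => h3.2 j (by omega)⟩
  · rintro (⟨rfl, i, hi, h1, h2, h3⟩ | ⟨⟨rfl, rfl⟩, hb, hy⟩)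
    · exact ⟨i + 1, by omega, ⟨fun _ => rfl, fun j hj => h1 j (by omega)⟩,
        ⟨fun h => absurd h (by omega), fun j hj => h2 j (by omega)⟩,
        ⟨fun h => absurd h (by omega), fun j hj => h3 j (by omega)⟩⟩
    · exact ⟨0, by omega, ⟨fun h => absurd h (by omega), fun j hj => absurd hj (by omega)⟩,
        ⟨fun _ => rfl, fun j _ => rfl⟩, ⟨fun _ => hb, fun j _ => hy j⟩⟩

theorem rule3_cons :
    rule3 (Fin.cons a x : Fin (k + 2) → ZMod n) (Fin.cons b y) ↔
      (a = b ∧ rule3 x y) ∨ ((a ≠ 0 ∧ b ≠ 0 ∧ a ≠ b) ∧ (x = 0 ∧ y = 0)) := by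
  simp only [rule3, Fin.exists_fin_succ (n := k + 1), Fin.forall_fin_succ (n := k + 1),
    Fin.cons_zero, Fin.cons_succ, Fin.val_succ, Fin.val_zero, Fin.succ_lt_succ_iff,
    Fin.succ_pos, Fin.not_lt_zero, lt_irrefl, funext_iff, forall_and, Pi.zero_apply,
    true_imp_iff, false_imp_iff, implies_true, and_true, true_and]
  constructor
  · rintro (⟨-, h1, h2, h3, h4, h5⟩ | ⟨p, hp, ⟨h1, h2⟩, h3, h4, h5, h6⟩)
    · exact Or.inr ⟨⟨h1, h2, h3⟩, h4, h5⟩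
    · exact Or.inl ⟨h1, p, by omega, h2, h3, h4, h5, h6⟩
  · rintro (⟨h1, p, hp, h2, h3, h4, h5, h6⟩ | ⟨⟨h1, h2, h3⟩, h4, h5⟩)
    · exact Or.inr ⟨p, by omega, ⟨h1, h2⟩, h3, h4, h5, h6⟩
    · exact Or.inl ⟨by omega, h1, h2, h3, h4, h5⟩

/-- The edges of `H_{n,k+2}` in terms of the first letter: those inside one of the `n` copies of
`H_{n,k+1}`, those from the root to the words without zero letter, and those among the
words `a0…0` with `a ≠ 0`. -/
theorem hierGraph_adj_cons :
    (hierGraph n (k + 2)).Adj (Fin.cons a x) (Fin.cons b y) ↔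
      (a = b ∧ (hierGraph n (k + 1)).Adj x y) ∨
      ((a = 0 ∧ x = 0) ∧ (b ≠ 0 ∧ ∀ j, y j ≠ 0)) ∨
      ((b = 0 ∧ y = 0) ∧ (a ≠ 0 ∧ ∀ j, x j ≠ 0)) ∨
      ((a ≠ 0 ∧ b ≠ 0 ∧ a ≠ b) ∧ (x = 0 ∧ y = 0)) := by
  simp only [hierGraph, SimpleGraph.fromRel_adj, rule1_cons, rule2_cons, rule3_cons, ne_eq,
    Fin.cons_inj, eq_comm (a := b) (b := a)]
  by_cases hab : a = b
  · subst hab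
    by_cases ha : a = 0 <;> simp [ha]
  · simp only [hab, false_and, false_or, not_false_eq_true, true_and, and_true]
    generalize (∀ j, ¬x j = 0) = p, (∀ j, ¬y j = 0) = q
    by_cases ha : a = 0 <;> by_cases hb : b = 0 <;> simp only [ha, hb] <;> tauto

end Recursion

theorem sum_cons {n k : ℕ} [NeZero n] (f : (Fin (k + 1) → ZMod n) → ℤ) :
    ∑ x, f x = ∑ a : ZMod n, ∑ x : Fin k → ZMod n, f (Fin.cons a x) := by
  rw [← (Fin.consEquiv (fun _ : Fin (k + 1) => ZMod n)).sum_comp f, Fintype.sum_prod_type]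
  rfl

theorem sum_ne_zero (n : ℕ) [NeZero n] :
    (∑ a : ZMod n, if a ≠ 0 then (1 : ℤ) else 0) = n - 1 := by
  have h : ∀ a : ZMod n, (if a ≠ 0 then (1 : ℤ) else 0) = 1 - if a = 0 then 1 else 0 := by
    intro a; split_ifs <;> simp_all
  simp only [h, Finset.sum_sub_distrib, Finset.sum_ite_eq', Finset.mem_univ, if_true,
    Finset.sum_const, Finset.card_univ, ZMod.card, nsmul_eq_mul, mul_one]

theorem sum_forall_ne_zero (n k : ℕ) [NeZero n] :
    (∑ x : Fin k → ZMod n, if ∀ j, x j ≠ 0 then (1 : ℤ) else 0) = ((n : ℤ) - 1) ^ k := by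
  have h : ∀ x : Fin k → ZMod n, (if ∀ j, x j ≠ 0 then (1 : ℤ) else 0)
      = ∏ j, if x j ≠ 0 then 1 else 0 := by
    intro x
    rw [Finset.prod_ite_zero]
    simp
  simp only [h]
  rw [← sum_ne_zero n, Fintype.sum_pow]

/-- The number of ordered pairs of distinct nonzero letters. -/
theorem sum_ne_zero_pairs (n : ℕ) [NeZero n] :
    (∑ a : ZMod n, ∑ b : ZMod n, if a ≠ 0 ∧ b ≠ 0 ∧ a ≠ b then (1 : ℤ) else 0)
      = (n - 1) * (n - 2) := by
  have h : ∀ a b : ZMod n, (if a ≠ 0 ∧ b ≠ 0 ∧ a ≠ b then (1 : ℤ) else 0)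
      = (if a ≠ 0 then 1 else 0) * (if b ≠ 0 then 1 else 0)
        - if a = b then (if b ≠ 0 then 1 else 0) else 0 := by
    intro a b
    by_cases ha : a = 0 <;> by_cases hb : b = 0 <;> by_cases hab : a = b <;> simp_all
  simp only [h, Finset.sum_sub_distrib, ← Finset.mul_sum, ← Finset.sum_mul, sum_ne_zero,
    Finset.sum_ite_eq, Finset.mem_univ, if_true]
  ring

theorem dartCount_succ (n k : ℕ) [NeZero n] :
    dartCount n (k + 2) =
      n * dartCount n (k + 1) + 2 * ((n : ℤ) - 1) ^ (k + 2) + (n - 1) * (n - 2) := by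
  classical
  -- The four cases of `hierGraph_adj_cons` are mutually exclusive, so indicators add up.
  have h : ∀ (a b : ZMod n) (x y : Fin (k + 1) → ZMod n),
      (if (hierGraph n (k + 2)).Adj (Fin.cons a x) (Fin.cons b y) then (1 : ℤ) else 0) =
        (if a = b then 1 else 0) * (if (hierGraph n (k + 1)).Adj x y then 1 else 0)
        + ((if a = 0 then 1 else 0) * (if b ≠ 0 then 1 else 0))
          * ((if x = 0 then 1 else 0) * (if ∀ j, y j ≠ 0 then 1 else 0))
        + ((if a ≠ 0 then 1 else 0) * (if b = 0 then 1 else 0))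
          * ((if ∀ j, x j ≠ 0 then 1 else 0) * (if y = 0 then 1 else 0))
        + (if a ≠ 0 ∧ b ≠ 0 ∧ a ≠ b then 1 else 0)
          * ((if x = 0 then 1 else 0) * (if y = 0 then 1 else 0)) := by
    intro a b x y
    simp only [hierGraph_adj_cons]
    by_cases hab : a = b
    · subst hab
      by_cases ha : a = 0 <;> simp [ha]
    · by_cases ha : a = 0
      · have hb : b ≠ 0 := fun hb => hab (ha.trans hb.symm)
        simp [ha, hb, hb.symm, ← ite_and, and_comm]
      · by_cases hb : b = 0 <;> simp [ha, hb, hab, ← ite_and, and_comm]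
  have hroot : (∑ x : Fin (k + 1) → ZMod n, if x = 0 then (1 : ℤ) else 0) = 1 := by simp
  have hzero : (∑ a : ZMod n, if a = 0 then (1 : ℤ) else 0) = 1 := by simp
  have hdiag : (∑ a : ZMod n, ∑ b : ZMod n, if a = b then (1 : ℤ) else 0) = n := by
    simp [ZMod.card]
  have hD : (∑ x, ∑ y, if (hierGraph n (k + 1)).Adj x y then (1 : ℤ) else 0)
      = dartCount n (k + 1) := by
    unfold dartCount
    congr!
  have hunfold : dartCount n (k + 2) = ∑ a : ZMod n, ∑ b : ZMod n,
      ∑ x : Fin (k + 1) → ZMod n, ∑ y : Fin (k + 1) → ZMod n,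
      (if (hierGraph n (k + 2)).Adj (Fin.cons a x) (Fin.cons b y) then (1 : ℤ) else 0) := by
    unfold dartCount
    rw [sum_cons]
    refine Finset.sum_congr rfl fun a _ => ?_
    rw [Finset.sum_comm, sum_cons]
    refine Finset.sum_congr rfl fun b _ => ?_
    rw [Finset.sum_comm]
  rw [hunfold]
  simp only [h, Finset.sum_add_distrib, ← Finset.mul_sum, ← Finset.sum_mul, hroot, hzero, hdiag,
    hD, sum_ne_zero, sum_forall_ne_zero, sum_ne_zero_pairs]
  ring

/-- `H_{n,1}` is the complete graph on `n` vertices. -/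
theorem dartCount_one (n : ℕ) [NeZero n] : dartCount n 1 = n * (n - 1) := by
  classical
  have hadj : ∀ x y : Fin 1 → ZMod n, (hierGraph n 1).Adj x y ↔ x ≠ y := by
    intro x y
    rw [hierGraph, SimpleGraph.fromRel_adj]
    exact ⟨fun h => h.1, fun h => ⟨h, Or.inl (Or.inl ⟨h, fun j hj => absurd hj (by omega)⟩)⟩⟩
  have h : ∀ x y : Fin 1 → ZMod n, (if (hierGraph n 1).Adj x y then (1 : ℤ) else 0)
      = 1 - if x = y then 1 else 0 := by
    intro x y
    rw [hadj]
    by_cases hxy : x = y <;> simp [hxy]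
  have hcalc : (∑ x : Fin 1 → ZMod n, ∑ y : Fin 1 → ZMod n,
      (1 - if x = y then (1 : ℤ) else 0)) = n * (n - 1) := by
    simp [ZMod.card]
    ring
  rw [← hcalc]
  unfold dartCount
  refine Finset.sum_congr rfl fun x _ => Finset.sum_congr rfl fun y _ => ?_
  rw [← h]

/-- twice the number of edges of `H_{n,k}` equals
`3n^{k+1} - 2(n-1)^{k+1} - 4n^k - n + 2`. -/
theorem hierGraph_size (n k : ℕ) (hn : 2 ≤ n) (hk : 1 ≤ k) :
    (2 * ((hierGraph n k).edgeSet.ncard) : ℤ) =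
      3 * (n : ℤ) ^ (k + 1) - 2 * ((n : ℤ) - 1) ^ (k + 1) - 4 * (n : ℤ) ^ k - (n : ℤ) + 2 := by
  have : NeZero n := ⟨by omega⟩
  rw [← dartCount_eq]
  obtain ⟨k, rfl⟩ := Nat.exists_eq_add_of_le' hk
  induction k with
  | zero =>
    rw [dartCount_one]
    ring
  | succ k ih =>
    rw [dartCount_succ, ih (by omega)]
    ring
end

section
/- In the hierarchical graph H_{n,k}, the eccentricity of the root vertex r = 00…0 equals k, and the radius of H_{n,k} equals k. -/
/-- The `j`-th coordinate of `x` exists and is nonzero. Indexing by `ℕ` avoids arithmetic in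
`Fin k`; out of range the value is `False`. -/
def nz {n k : ℕ} (x : Fin k → ZMod n) (j : ℕ) : Prop := ∃ h : j < k, x ⟨j, h⟩ ≠ 0

open Classical in
/-- The number of positions at which consecutive coordinates of `x` have different zero status. -/
noncomputable def changes {n k : ℕ} (x : Fin k → ZMod n) : ℕ :=
  ((Finset.range (k - 1)).filter fun j => ¬ (nz x j ↔ nz x (j + 1))).card

open Classical in
/-- The potential measuring the distance from the vertices whose first coordinate has zero
status `s`. -/
noncomputable def potential {n k : ℕ} (s : Prop) (x : Fin k → ZMod n) : ℕ :=
  if (nz x 0 ↔ s) then 0 else 1 + changes x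

/-- The condition, symmetric in `x` and `y`, that the zero patterns of `x` and `y` agree before
some position and are both constant from that position on. -/
def FlipRel {n k : ℕ} (x y : Fin k → ZMod n) : Prop :=
  ∃ i : ℕ, (∀ j < i, (nz x j ↔ nz y j)) ∧
    (∀ j, i ≤ j → j + 1 < k → (nz x j ↔ nz x (j + 1))) ∧
    (∀ j, i ≤ j → j + 1 < k → (nz y j ↔ nz y (j + 1)))

lemma FlipRel.symm {n k : ℕ} {x y : Fin k → ZMod n} (h : FlipRel x y) : FlipRel y x := by
  obtain ⟨i, h1, h2, h3⟩ := h
  exact ⟨i, fun j hj => (h1 j hj).symm, h3, h2⟩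

lemma nz_congr {n k : ℕ} {x y : Fin k → ZMod n} {j : ℕ}
    (h : ∀ hj : j < k, x ⟨j, hj⟩ = y ⟨j, hj⟩) : nz x j ↔ nz y j := by
  unfold nz
  exact exists_congr fun hj => by rw [h hj]

lemma flipRel_of_rules {n k : ℕ} {x y : Fin k → ZMod n}
    (h : rule1 x y ∨ rule2 x y ∨ rule3 x y) : FlipRel x y := by
  rcases h with ⟨-, h⟩ | ⟨i, hi, h1, h2, h3⟩ | ⟨p, hp, h1, h2, h3, -, h4⟩
  · exact ⟨k - 1, fun j hj => nz_congr fun hjk => h ⟨j, hjk⟩ (by simp only; omega),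
      fun j _ _ => by omega, fun j _ _ => by omega⟩
  · refine ⟨i, fun j hj => nz_congr fun hjk => h1 ⟨j, hjk⟩ hj, fun j hj hk => ?_,
      fun j hj hk => ?_⟩
    · exact iff_of_false (fun ⟨_, h⟩ => h (h2 _ hj)) (fun ⟨_, h⟩ => h (h2 _ (Nat.le_succ_of_le hj)))
    · exact iff_of_true ⟨by omega, h3 _ hj⟩ ⟨hk, h3 _ (Nat.le_succ_of_le hj)⟩
  · refine ⟨k, fun j hj => ?_, fun j _ _ => by omega, fun j _ _ => by omega⟩
    rcases lt_trichotomy j (p : ℕ) with hjp | rfl | hjp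
    · exact nz_congr fun hjk => h1 ⟨j, hjk⟩ hjp
    · exact iff_of_true ⟨hj, h2⟩ ⟨hj, h3⟩
    · exact nz_congr fun hjk => by
        have := h4 ⟨j, hjk⟩ hjp
        rw [this.1, this.2]

lemma adj_pattern {n k : ℕ} {x y : Fin k → ZMod n} (h : (hierGraph n k).Adj x y) :
    FlipRel x y := by
  rcases (SimpleGraph.fromRel_adj _ _ _).1 h with ⟨-, h | h⟩
  · exact flipRel_of_rules h
  · exact (flipRel_of_rules h).symm

lemma changes_le {n k : ℕ} {x y : Fin k → ZMod n} (h : FlipRel x y) :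
    changes x ≤ changes y + 1 := by
  classical
  obtain ⟨i, h1, h2, h3⟩ := h
  unfold changes
  -- only the transition from position `i - 1` to position `i` can differ
  refine (Finset.card_le_card (t := insert (i - 1) _) ?_).trans (Finset.card_insert_le _ _)
  intro j hj
  simp only [Finset.mem_insert, Finset.mem_filter, Finset.mem_range] at hj ⊢
  obtain ⟨hjk, hne⟩ := hj
  by_cases hji : i ≤ j
  · exact absurd (h2 j hji (by omega)) hne
  · by_cases hji' : j + 1 < i
    · right
      rw [← h1 j (by omega), ← h1 (j + 1) hji']
      exact ⟨hjk, hne⟩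
    · left; omega

/-- A change of the status of the first coordinate forces the zero patterns to be constant. -/
lemma changes_eq_zero {n k : ℕ} {x y : Fin k → ZMod n} (h : FlipRel x y)
    (h0 : ¬ (nz x 0 ↔ nz y 0)) : changes x = 0 := by
  classical
  obtain ⟨i, h1, h2, h3⟩ := h
  have hi : i = 0 := by
    by_contra hi
    exact h0 (h1 0 (Nat.pos_of_ne_zero hi))
  subst hi
  unfold changes
  rw [Finset.card_eq_zero, Finset.filter_eq_empty_iff]
  intro j hj
  have := Finset.mem_range.1 hj
  exact not_not.2 (h2 j (Nat.zero_le _) (by omega))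

lemma potential_le {n k : ℕ} {s : Prop} {x y : Fin k → ZMod n} (h : FlipRel x y) :
    potential s x ≤ potential s y + 1 := by
  unfold potential
  have hc := changes_le h
  split_ifs with hx hy
  · omega
  · omega
  · have := changes_eq_zero h (by tauto)
    omega
  · omega

lemma potential_le_walk {n k : ℕ} (s : Prop) {x y : Fin k → ZMod n}
    (w : (hierGraph n k).Walk x y) : potential s y ≤ potential s x + w.length := by
  induction w with
  | nil => simp
  | cons h w ih =>
    have := potential_le (s := s) (adj_pattern h).symm
    simp only [SimpleGraph.Walk.length_cons]
    omega

lemma changes_alternating {n k : ℕ} {z : Fin k → ZMod n}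
    (hz : ∀ j, j + 1 < k → ¬ (nz z j ↔ nz z (j + 1))) : changes z = k - 1 := by
  classical
  unfold changes
  rw [Finset.filter_true_of_mem, Finset.card_range]
  intro j hj
  have := Finset.mem_range.1 hj
  exact hz j (by omega)

/-- Some alternating vertex has a first coordinate of the status opposite to `s`. -/
lemma exists_potential_eq {n k : ℕ} (hn : 2 ≤ n) (hk : 1 ≤ k) (s : Prop) :
    ∃ z : Fin k → ZMod n, potential s z = k := by
  have : Fact (1 < n) := ⟨hn⟩
  have h01 : ∀ j, nz (z01 n k) j ↔ j < k ∧ j % 2 = 1 := by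
    intro j
    simp only [nz, z01]
    by_cases h : j % 2 = 0 <;> simp [h]
    omega
  have h10 : ∀ j, nz (z10 n k) j ↔ j < k ∧ j % 2 = 0 := by
    intro j
    simp only [nz, z10]
    by_cases h : j % 2 = 0 <;> simp [h]
  by_cases hs : s
  · refine ⟨z01 n k, ?_⟩
    have hc : changes (z01 n k) = k - 1 := changes_alternating fun j hj => by
      rw [h01, h01]; omega
    have h0 : ¬ (nz (z01 n k) 0 ↔ s) := by
      rw [h01]; simp [hs]
    rw [potential, if_neg h0, hc]; omega
  · refine ⟨z10 n k, ?_⟩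
    have hc : changes (z10 n k) = k - 1 := changes_alternating fun j hj => by
      rw [h10, h10]; omega
    have h0 : ¬ (nz (z10 n k) 0 ↔ s) := by
      rw [h10]; simp [hs]; omega
    rw [potential, if_neg h0, hc]; omega

/-- A final block of zeros is adjacent to every final block of nonzeros; blocks of length one are
covered by `rule1`, longer ones by `rule2`. -/
lemma adj_flip {n k : ℕ} {x y : Fin k → ZMod n} {i : ℕ} (hi : i < k)
    (h1 : ∀ j : Fin k, (j : ℕ) < i → x j = y j) (h2 : ∀ j : Fin k, i ≤ (j : ℕ) → x j = 0)
    (h3 : ∀ j : Fin k, i ≤ (j : ℕ) → y j ≠ 0) : (hierGraph n k).Adj x y := by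
  have hne : x ≠ y := by
    rintro rfl
    exact h3 ⟨i, hi⟩ le_rfl (h2 ⟨i, hi⟩ le_rfl)
  refine (SimpleGraph.fromRel_adj _ _ _).2 ⟨hne, Or.inl ?_⟩
  by_cases h : i + 2 ≤ k
  · exact Or.inr (Or.inl ⟨i, h, h1, h2, h3⟩)
  · exact Or.inl ⟨hne, fun j hj => h1 j (by omega)⟩

lemma exists_walk_root_of_block {n k : ℕ} (hn : 2 ≤ n) (m : ℕ) (hm : m < k)
    (x : Fin k → ZMod n)
    (hx : (∀ j : Fin k, m ≤ (j : ℕ) → x j = 0) ∨ (∀ j : Fin k, m ≤ (j : ℕ) → x j ≠ 0)) :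
    ∃ w : (hierGraph n k).Walk (hierRoot n k) x, w.length ≤ m + 1 := by
  have : Fact (1 < n) := ⟨hn⟩
  induction m generalizing x with
  | zero =>
    rcases hx with hx | hx
    · obtain rfl : x = hierRoot n k := funext fun j => hx j (Nat.zero_le _)
      exact ⟨.nil, by simp⟩
    · have hadj : (hierGraph n k).Adj (hierRoot n k) x :=
        adj_flip hm (fun j hj => by omega) (fun j _ => rfl) hx
      exact ⟨hadj.toWalk, by simp⟩
  | succ m ih =>
    have hmk : m < k := by omega
    have split : ∀ {p : Fin k → Prop}, p ⟨m, hmk⟩ → (∀ j : Fin k, m + 1 ≤ (j : ℕ) → p j) →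
        ∀ j : Fin k, m ≤ (j : ℕ) → p j := by
      intro p h0 h1 j hj
      rcases hj.eq_or_lt with h | h
      · obtain rfl : (⟨m, hmk⟩ : Fin k) = j := Fin.ext h
        exact h0
      · exact h1 j h
    -- `y c` is `x` with its final block overwritten by `c`
    let y : ZMod n → Fin k → ZMod n := fun c j => if (j : ℕ) < m + 1 then x j else c
    have hy1 : ∀ c (j : Fin k), (j : ℕ) < m + 1 → y c j = x j := fun c j hj => if_pos hj
    have hy2 : ∀ c (j : Fin k), m + 1 ≤ (j : ℕ) → y c j = c :=
      fun c j hj => if_neg (not_lt.2 hj)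
    have hym : ∀ c, y c ⟨m, hmk⟩ = x ⟨m, hmk⟩ := fun c => hy1 c _ (Nat.lt_succ_self m)
    by_cases h0 : x ⟨m, hmk⟩ = 0
    · rcases hx with hx | hx
      · obtain ⟨w, hw⟩ := ih hmk x (Or.inl (split h0 hx))
        exact ⟨w, by omega⟩
      · obtain ⟨w, hw⟩ := ih hmk (y 0) (Or.inl (split (by rw [hym, h0]) (hy2 0)))
        have hadj : (hierGraph n k).Adj (y 0) x := adj_flip hm (hy1 0) (hy2 0) hx
        exact ⟨w.concat hadj, by rw [SimpleGraph.Walk.length_concat]; omega⟩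
    · rcases hx with hx | hx
      · have hy1' : ∀ j : Fin k, m + 1 ≤ (j : ℕ) → y 1 j ≠ 0 := fun j hj => by
          rw [hy2 1 j hj]; exact one_ne_zero
        obtain ⟨w, hw⟩ := ih hmk (y 1)
          (Or.inr (split (p := fun j => y 1 j ≠ 0) (by rwa [hym]) hy1'))
        have hadj : (hierGraph n k).Adj x (y 1) :=
          adj_flip hm (fun j hj => (hy1 1 j hj).symm) hx hy1'
        exact ⟨w.concat hadj.symm, by rw [SimpleGraph.Walk.length_concat]; omega⟩
      · obtain ⟨w, hw⟩ := ih hmk x (Or.inr (split (p := fun j => x j ≠ 0) h0 hx))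
        exact ⟨w, by omega⟩

lemma exists_walk_root {n k : ℕ} (hn : 2 ≤ n) (hk : 1 ≤ k) (x : Fin k → ZMod n) :
    ∃ w : (hierGraph n k).Walk (hierRoot n k) x, w.length ≤ k := by
  have hlt : k - 1 < k := by omega
  -- the last coordinate on its own is a block of constant status
  have hlast : ∀ j : Fin k, k - 1 ≤ (j : ℕ) → j = ⟨k - 1, hlt⟩ := fun j hj =>
    Fin.ext (by simp only; omega)
  obtain ⟨w, hw⟩ := exists_walk_root_of_block hn (k - 1) hlt x (by
    by_cases h : x ⟨k - 1, hlt⟩ = 0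
    · exact Or.inl fun j hj => by rw [hlast j hj, h]
    · exact Or.inr fun j hj => by rwa [hlast j hj])
  exact ⟨w, by omega⟩

lemma le_eccentricity {n k : ℕ} (hn : 2 ≤ n) (hk : 1 ≤ k) (v : Fin k → ZMod n) :
    k ≤ eccentricity (hierGraph n k) v := by
  have : NeZero n := ⟨by omega⟩
  obtain ⟨z, hz⟩ := exists_potential_eq hn hk (nz v 0)
  -- reachability matters: the distance between unreachable vertices is `0` by convention
  have hreach : (hierGraph n k).Reachable v z := by
    obtain ⟨w₁, -⟩ := exists_walk_root hn hk v
    obtain ⟨w₂, -⟩ := exists_walk_root hn hk z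
    exact ⟨w₁.reverse.append w₂⟩
  obtain ⟨w, hw⟩ := hreach.exists_walk_length_eq_dist
  have h := potential_le_walk (nz v 0) w
  have hv : potential (nz v 0) v = 0 := if_pos Iff.rfl
  have hd : k ≤ (hierGraph n k).dist v z := by omega
  exact hd.trans (le_csSup (Set.finite_range _).bddAbove ⟨z, rfl⟩)

/-- the eccentricity of the root of `H_{n,k}` equals `k`, and the
radius of `H_{n,k}` equals `k`. -/
theorem hierGraph_eccentricity_root_and_radius (n k : ℕ) (hn : 2 ≤ n) (hk : 1 ≤ k) :
    eccentricity (hierGraph n k) (hierRoot n k) = k ∧ graphRadius (hierGraph n k) = k := by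
  have hroot : eccentricity (hierGraph n k) (hierRoot n k) = k := by
    refine le_antisymm (csSup_le (Set.range_nonempty _) ?_) (le_eccentricity hn hk _)
    rintro _ ⟨x, rfl⟩
    obtain ⟨w, hw⟩ := exists_walk_root hn hk x
    exact (SimpleGraph.dist_le w).trans hw
  refine ⟨hroot, le_antisymm (Nat.sInf_le ⟨_, hroot⟩) (le_csInf (Set.range_nonempty _) ?_)⟩
  rintro _ ⟨v, rfl⟩
  exact le_eccentricity hn hk v
end

section
/- The diameter of the hierarchical graph H_{n,k} equals 2k − 1; that is, every two vertices of H_{n,k} are at graph distance at most 2k − 1, and there exist two vertices at graph distance exactly 2k − 1. -/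
lemma rule1_succ {n k : ℕ} (x y : Fin (k + 1) → ZMod n) :
    rule1 x y ↔ (x 0 = y 0 ∧ rule1 (Fin.tail x) (Fin.tail y)) ∨ (k = 0 ∧ x 0 ≠ y 0) := by
  have hxy : x = y ↔ x 0 = y 0 ∧ Fin.tail x = Fin.tail y := by
    simp only [funext_iff, Fin.forall_fin_succ, Fin.tail]
  unfold rule1
  rw [Ne, hxy, Fin.forall_fin_succ]
  rcases k with _ | k
  · simp [Subsingleton.elim (Fin.tail x) (Fin.tail y)]
  · simp only [Fin.tail, Fin.val_succ, Fin.val_zero, add_lt_add_iff_right]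
    grind

lemma rule2_succ {n k : ℕ} (x y : Fin (k + 1) → ZMod n) :
    rule2 x y ↔ (x 0 = y 0 ∧ rule2 (Fin.tail x) (Fin.tail y)) ∨
      (1 ≤ k ∧ x 0 = 0 ∧ y 0 ≠ 0 ∧ Fin.tail x = hierRoot n k ∧
        Fin.tail y ∈ peripheral n k) := by
  unfold rule2
  simp only [Fin.forall_fin_succ, funext_iff, peripheral, hierRoot, Set.mem_ofPred_eq, Fin.tail,
    Fin.val_succ, Fin.val_zero]
  constructor
  · rintro ⟨_ | i, hi, h1, h2, h3⟩
    · right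
      exact ⟨by omega, h2.1 le_rfl, h3.1 le_rfl, fun j => h2.2 j (Nat.zero_le _),
        fun j => h3.2 j (Nat.zero_le _)⟩
    · left
      exact ⟨h1.1 (by omega), i, by omega, fun j hj => h1.2 j (by omega),
        fun j hj => h2.2 j (by omega), fun j hj => h3.2 j (by omega)⟩
  · rintro (⟨h0, i, hi, h1, h2, h3⟩ | ⟨hk, hx, hy, hx', hy'⟩)
    · exact ⟨i + 1, by omega, ⟨fun _ => h0, fun j hj => h1 j (by omega)⟩,
        ⟨fun h => absurd h (by omega), fun j hj => h2 j (by omega)⟩,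
        ⟨fun h => absurd h (by omega), fun j hj => h3 j (by omega)⟩⟩
    · exact ⟨0, by omega, ⟨fun h => absurd h (by omega), fun j hj => absurd hj (by omega)⟩,
        ⟨fun _ => hx, fun j _ => hx' j⟩, ⟨fun _ => hy, fun j _ => hy' j⟩⟩

lemma rule3_succ {n k : ℕ} (x y : Fin (k + 1) → ZMod n) :
    rule3 x y ↔ (x 0 = y 0 ∧ rule3 (Fin.tail x) (Fin.tail y)) ∨
      (1 ≤ k ∧ x 0 ≠ 0 ∧ y 0 ≠ 0 ∧ x 0 ≠ y 0 ∧ Fin.tail x = hierRoot n k ∧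
        Fin.tail y = hierRoot n k) := by
  unfold rule3
  rw [Fin.exists_fin_succ]
  simp only [Fin.forall_fin_succ, funext_iff, hierRoot, Fin.tail, Fin.val_succ, Fin.val_zero,
    Fin.succ_lt_succ_iff, Fin.succ_pos, Fin.not_lt_zero, false_imp_iff, true_imp_iff,
    true_and, forall_and, implies_true]
  constructor
  · rintro (⟨hk, hx, hy, hxy, h⟩ | ⟨p, hp, ⟨h0, h1⟩, h⟩)
    · exact .inr ⟨by omega, hx, hy, hxy, h⟩
    · exact .inl ⟨h0, p, by omega, h1, h⟩
  · rintro (⟨h0, p, hp, h1, h⟩ | ⟨hk, hx, hy, hxy, h⟩)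
    · exact .inr ⟨p, by omega, ⟨h0, h1⟩, h⟩
    · exact .inl ⟨by omega, hx, hy, hxy, h⟩

/-- Recursive description of adjacency. The formula also covers `k = 0`, where the conditions on
the empty tails hold vacuously and the graph is complete on `ZMod n`. -/
lemma hierGraph_adj_succ {n k : ℕ} (x y : Fin (k + 1) → ZMod n) :
    (hierGraph n (k + 1)).Adj x y ↔
      (x 0 = y 0 ∧ (hierGraph n k).Adj (Fin.tail x) (Fin.tail y)) ∨
      (x 0 = 0 ∧ y 0 ≠ 0 ∧ Fin.tail x = hierRoot n k ∧ Fin.tail y ∈ peripheral n k) ∨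
      (y 0 = 0 ∧ x 0 ≠ 0 ∧ Fin.tail y = hierRoot n k ∧ Fin.tail x ∈ peripheral n k) ∨
      (x 0 ≠ 0 ∧ y 0 ≠ 0 ∧ x 0 ≠ y 0 ∧ Fin.tail x = hierRoot n k ∧
        Fin.tail y = hierRoot n k) := by
  have hroot : k = 0 → ∀ v : Fin k → ZMod n, v = hierRoot n k ∧ v ∈ peripheral n k := by
    rintro rfl v
    exact ⟨Subsingleton.elim _ _, fun j => j.elim0⟩
  have hne : x ≠ y ↔ x 0 ≠ y 0 ∨ Fin.tail x ≠ Fin.tail y := by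
    rw [← not_and_or, Ne, not_iff_not]
    simp only [funext_iff, Fin.forall_fin_succ, Fin.tail]
  unfold hierGraph
  rw [SimpleGraph.fromRel_adj, SimpleGraph.fromRel_adj, hne, rule1_succ x y, rule1_succ y x,
    rule2_succ x y, rule2_succ y x, rule3_succ x y, rule3_succ y x]
  rcases Nat.eq_zero_or_pos k with hk | hk
  · have hx := hroot hk (Fin.tail x)
    have hy := hroot hk (Fin.tail y)
    grind
  · have hk0 : k ≠ 0 := by omega
    have hk1 : 1 ≤ k := hk
    clear hroot hne
    by_cases h0 : x 0 = y 0
    · by_cases hy : y 0 = 0 <;> simp [h0, hy, hk0]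
    · have h0' : y 0 ≠ x 0 := fun h => h0 h.symm
      by_cases hx : x 0 = 0 <;> by_cases hy : y 0 = 0 <;>
        simp [h0, h0', hx, hy, hk0, hk1] <;> grind

/-- The predicate that `x` and `y` are joined by a walk of length at most `m`. Unlike
`dist x y ≤ m`, it carries reachability with it. -/
def Within {V : Type*} (G : SimpleGraph V) (m : ℕ) (x y : V) : Prop :=
  ∃ w : G.Walk x y, w.length ≤ m

lemma Within.trans {V : Type*} {G : SimpleGraph V} {m l : ℕ} {x y z : V}
    (h : Within G m x y) (h' : Within G l y z) : Within G (m + l) x z := by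
  obtain ⟨w, hw⟩ := h
  obtain ⟨w', hw'⟩ := h'
  exact ⟨w.append w', by rw [SimpleGraph.Walk.length_append]; omega⟩

lemma Within.symm {V : Type*} {G : SimpleGraph V} {m : ℕ} {x y : V}
    (h : Within G m x y) : Within G m y x := by
  obtain ⟨w, hw⟩ := h
  exact ⟨w.reverse, by rwa [SimpleGraph.Walk.length_reverse]⟩

lemma Within.mono {V : Type*} {G : SimpleGraph V} {m l : ℕ} {x y : V}
    (h : Within G m x y) (hml : m ≤ l) : Within G l x y := by
  obtain ⟨w, hw⟩ := h
  exact ⟨w, hw.trans hml⟩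

lemma Within.of_adj {V : Type*} {G : SimpleGraph V} {x y : V} (h : G.Adj x y) :
    Within G 1 x y := ⟨h.toWalk, by simp⟩

/-- Walks in `H_{n,k}` lift to each copy of it in `H_{n,k+1}`. -/
lemma Within.cons {n k m : ℕ} {x y : Fin k → ZMod n} (a : ZMod n)
    (h : Within (hierGraph n k) m x y) :
    Within (hierGraph n (k + 1)) m (Fin.cons a x : Fin (k + 1) → ZMod n)
      (Fin.cons a y : Fin (k + 1) → ZMod n) := by
  obtain ⟨w, hw⟩ := h
  let φ : hierGraph n k →g hierGraph n (k + 1) :=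
    { toFun := fun v => (Fin.cons a v : Fin (k + 1) → ZMod n)
      map_rel' := fun {u v} huv => by
        rw [hierGraph_adj_succ]
        left
        simpa using huv }
  exact ⟨w.map φ, by rwa [SimpleGraph.Walk.length_map]⟩

lemma cons_root (n k : ℕ) :
    (Fin.cons 0 (hierRoot n k) : Fin (k + 1) → ZMod n) = hierRoot n (k + 1) := by
  funext j
  refine Fin.cases ?_ (fun j => ?_) j <;> simp [hierRoot]

lemma cons_mem_peripheral {n k : ℕ} {a : ZMod n} {y : Fin k → ZMod n} (ha : a ≠ 0)
    (hy : y ∈ peripheral n k) :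
    (Fin.cons a y : Fin (k + 1) → ZMod n) ∈ peripheral n (k + 1) := by
  intro j
  refine Fin.cases ?_ (fun j => ?_) j
  · simpa using ha
  · simpa using hy j

/-- The root of `H_{n,k+1}` is adjacent to the peripheral vertices of every nonzero copy. -/
lemma adj_root_cons {n k : ℕ} {a : ZMod n} {y : Fin k → ZMod n} (ha : a ≠ 0)
    (hy : y ∈ peripheral n k) :
    (hierGraph n (k + 1)).Adj (Fin.cons 0 (hierRoot n k) : Fin (k + 1) → ZMod n)
      (Fin.cons a y : Fin (k + 1) → ZMod n) := by
  rw [hierGraph_adj_succ]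
  right; left
  simpa using ⟨ha, hy⟩

lemma near_root_and_peripheral (n : ℕ) (hn : 2 ≤ n) (k : ℕ) (x : Fin k → ZMod n) :
    Within (hierGraph n k) k x (hierRoot n k) ∧
      ∃ y ∈ peripheral n k, Within (hierGraph n k) k x y := by
  have : Fact (1 < n) := ⟨hn⟩
  induction k with
  | zero =>
    refine ⟨?_, x, fun j => j.elim0, ⟨.nil, le_rfl⟩⟩
    rw [Subsingleton.elim x (hierRoot n 0)]
    exact ⟨.nil, le_rfl⟩
  | succ k ih =>
    obtain ⟨hr, y, hy, hp⟩ := ih (Fin.tail x)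
    have hx : (Fin.cons (x 0) (Fin.tail x) : Fin (k + 1) → ZMod n) = x := Fin.cons_self_tail x
    by_cases h0 : x 0 = 0
    · have hr' := hr.cons (x 0)
      rw [hx, h0] at hr'
      have hone : (fun _ => 1 : Fin k → ZMod n) ∈ peripheral n k := fun _ => one_ne_zero
      refine ⟨?_, _, cons_mem_peripheral one_ne_zero hone,
        hr'.trans (.of_adj (adj_root_cons one_ne_zero hone))⟩
      rw [← cons_root]
      exact hr'.mono (Nat.le_succ k)
    · have hp' := hp.cons (x 0)
      rw [hx] at hp'
      refine ⟨?_, _, cons_mem_peripheral h0 hy, hp'.mono (Nat.le_succ k)⟩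
      rw [← cons_root]
      exact hp'.trans (Within.of_adj (adj_root_cons h0 hy)).symm

/-- For `k = 0` the truncated bound `2 * 0 - 1 = 0` is the correct one. -/
lemma within_two_mul_sub_one (n : ℕ) (hn : 2 ≤ n) (k : ℕ) (x y : Fin k → ZMod n) :
    Within (hierGraph n k) (2 * k - 1) x y := by
  induction k with
  | zero =>
    rw [Subsingleton.elim x y]
    exact ⟨.nil, le_rfl⟩
  | succ k ih =>
    -- Two vertices in the zero copy and a nonzero copy, respectively.
    have key : ∀ x y : Fin (k + 1) → ZMod n, x 0 = 0 → y 0 ≠ 0 →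
        Within (hierGraph n (k + 1)) (2 * (k + 1) - 1) x y := by
      intro x y hx hy
      have hr := (near_root_and_peripheral n hn k (Fin.tail x)).1.cons (x 0)
      obtain ⟨z, hz, hp⟩ := (near_root_and_peripheral n hn k (Fin.tail y)).2
      have hp := hp.cons (y 0)
      rw [Fin.cons_self_tail] at hr hp
      rw [hx] at hr
      exact ((hr.trans (.of_adj (adj_root_cons hy hz))).trans hp.symm).mono (by omega)
    by_cases hxy : x 0 = y 0
    · have h := (ih (Fin.tail x) (Fin.tail y)).cons (x 0)
      rw [Fin.cons_self_tail, hxy, Fin.cons_self_tail] at h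
      exact h.mono (by omega)
    by_cases hx : x 0 = 0
    · exact key x y hx (fun hy => hxy (hx.trans hy.symm))
    by_cases hy : y 0 = 0
    · exact (key y x hy hx).symm
    have h1 := (near_root_and_peripheral n hn k (Fin.tail x)).1.cons (x 0)
    have h2 := (near_root_and_peripheral n hn k (Fin.tail y)).1.cons (y 0)
    rw [Fin.cons_self_tail] at h1 h2
    have hadj : (hierGraph n (k + 1)).Adj
        (Fin.cons (x 0) (hierRoot n k) : Fin (k + 1) → ZMod n)
        (Fin.cons (y 0) (hierRoot n k) : Fin (k + 1) → ZMod n) := by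
      rw [hierGraph_adj_succ]
      simp [hx, hy, hxy]
    exact ((h1.trans (.of_adj hadj)).trans h2.symm).mono (by omega)

/-- The number of alternations between zero and nonzero entries along `x_1, …, x_k`, preceded by
an extra entry which is zero if `b = true` and nonzero if `b = false`. -/
def alternations {n : ℕ} : (k : ℕ) → Bool → (Fin k → ZMod n) → ℕ
  | 0, _, _ => 0
  | k + 1, b, x =>
    (if b = decide (x 0 = 0) then 0 else 1) + alternations k (decide (x 0 = 0)) (Fin.tail x)

lemma alternations_root (n k : ℕ) : alternations k true (hierRoot n k) = 0 := by
  induction k with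
  | zero => rfl
  | succ k ih =>
    have : Fin.tail (hierRoot n (k + 1)) = hierRoot n k := rfl
    simp [alternations, this, ih, show hierRoot n (k + 1) 0 = 0 from rfl]

lemma alternations_peripheral {n k : ℕ} {x : Fin k → ZMod n} (hx : x ∈ peripheral n k) :
    alternations k false x = 0 := by
  induction k with
  | zero => rfl
  | succ k ih =>
    have h : Fin.tail x ∈ peripheral n k := fun j => hx j.succ
    simp [alternations, ih h, hx 0]

lemma alternations_le_of_adj {n k : ℕ} {x y : Fin k → ZMod n} (h : (hierGraph n k).Adj x y)
    (b : Bool) : alternations k b x ≤ alternations k b y + 1 := by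
  induction k generalizing b with
  | zero => exact Nat.zero_le _
  | succ k ih =>
    rw [hierGraph_adj_succ] at h
    rcases h with ⟨h0, h⟩ | ⟨hx, hy, hx', hy'⟩ | ⟨hy, hx, hy', hx'⟩ | ⟨hx, hy, -, hx', hy'⟩
    · have := ih h (decide (x 0 = 0))
      simp only [alternations, ← h0]
      omega
    · cases b <;> simp [alternations, hx, hy, hx', alternations_root, alternations_peripheral hy']
    · cases b <;> simp [alternations, hx, hy, hy', alternations_root, alternations_peripheral hx']
    · simp [alternations, hx, hy, hx', hy']

/-- The signed potential: minus the number of alternations after a leading zero on the zero copy,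
plus this number on the other copies. -/
def signedAlternations {n k : ℕ} (x : Fin (k + 1) → ZMod n) : ℤ :=
  if x 0 = 0 then -(alternations (k + 1) true x : ℤ) else alternations (k + 1) true x

lemma signedAlternations_le_of_adj {n k : ℕ} {x y : Fin (k + 1) → ZMod n}
    (h : (hierGraph n (k + 1)).Adj x y) :
    signedAlternations x ≤ signedAlternations y + 1 := by
  have h1 := alternations_le_of_adj h true
  have h2 := alternations_le_of_adj h.symm true
  rw [hierGraph_adj_succ] at h
  rcases h with ⟨h0, -⟩ | ⟨hx, hy, -, -⟩ | ⟨hy, hx, hy', hx'⟩ | ⟨hx, hy, -⟩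
  · unfold signedAlternations
    rw [h0]
    split_ifs <;> omega
  · simp only [signedAlternations, hx, hy, if_true, if_false]
    omega
  · simp [signedAlternations, alternations, hx, hy, hy', alternations_root,
      alternations_peripheral hx']
  · simp only [signedAlternations, hx, hy, if_false]
    omega

lemma signedAlternations_le_of_walk {n k : ℕ} {x y : Fin (k + 1) → ZMod n}
    (w : (hierGraph n (k + 1)).Walk x y) :
    signedAlternations x ≤ signedAlternations y + w.length := by
  induction w with
  | nil => simp
  | cons h w ih =>
    have := signedAlternations_le_of_adj h
    rw [SimpleGraph.Walk.length_cons]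
    push_cast
    omega

lemma tail_z01 (n k : ℕ) : Fin.tail (z01 n (k + 1)) = z10 n k := by
  funext j
  simp only [Fin.tail, z01, z10, Fin.val_succ]
  split_ifs <;> first | rfl | omega

lemma tail_z10 (n k : ℕ) : Fin.tail (z10 n (k + 1)) = z01 n k := by
  funext j
  simp only [Fin.tail, z01, z10, Fin.val_succ]
  split_ifs <;> first | rfl | omega

lemma z01_zero (n k : ℕ) : z01 n (k + 1) 0 = 0 := by simp [z01]

lemma z10_zero (n k : ℕ) : z10 n (k + 1) 0 = 1 := by simp [z10]

lemma alternations_z (n : ℕ) (hn : 2 ≤ n) (k : ℕ) :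
    alternations k true (z10 n k) = k ∧ alternations k false (z01 n k) = k := by
  have : Fact (1 < n) := ⟨hn⟩
  induction k with
  | zero => exact ⟨rfl, rfl⟩
  | succ k ih =>
    simp [alternations, tail_z01, tail_z10, z01_zero, z10_zero, ih.1, ih.2, add_comm]

/-- the diameter of `H_{n,k}` equals `2k - 1`: every two vertices
are at distance at most `2k - 1`, and some pair is at distance exactly `2k - 1`. -/
theorem hierGraph_diameter (n k : ℕ) (hn : 2 ≤ n) (hk : 1 ≤ k) :
    (∀ x y : Fin k → ZMod n, (hierGraph n k).dist x y ≤ 2 * k - 1) ∧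
      (∃ x y : Fin k → ZMod n, (hierGraph n k).dist x y = 2 * k - 1) := by
  have : Fact (1 < n) := ⟨hn⟩
  have upper : ∀ x y : Fin k → ZMod n, (hierGraph n k).dist x y ≤ 2 * k - 1 := by
    intro x y
    obtain ⟨w, hw⟩ := within_two_mul_sub_one n hn k x y
    exact (SimpleGraph.dist_le w).trans hw
  refine ⟨upper, z10 n k, z01 n k, le_antisymm (upper _ _) ?_⟩
  obtain ⟨w₀, -⟩ := within_two_mul_sub_one n hn k (z10 n k) (z01 n k)
  obtain ⟨w, hw⟩ := w₀.reachable.exists_walk_length_eq_dist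
  rw [← hw]
  obtain ⟨k, rfl⟩ : ∃ m, k = m + 1 := ⟨k - 1, by omega⟩
  have h := signedAlternations_le_of_walk w
  have hk' := (alternations_z n hn k).1
  have hk'' := (alternations_z n hn (k + 1)).1
  simp only [signedAlternations, z01_zero, z10_zero, one_ne_zero, if_true, if_false, hk''] at h
  simp [alternations, z01_zero, tail_z01, hk'] at h
  omega
end

section
/- Let x and y be two distinct vertices of the hierarchical graph H_{n,k} that agree in their first i coordinates, where 0 ≤ i ≤ k − 1 (i.e., x_j = y_j for all 1 ≤ j ≤ i). Then the graph distance between x and y in H_{n,k} is at most 2(k − i) − 1. -/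
/-- The root of the copy of `H_{n,k-i}` formed by the vertices sharing the first `i` coordinates of
`x`: all coordinates from (0-indexed) position `i` on are replaced by `0`. -/
def trunc {n k : ℕ} (i : ℕ) (x : Fin k → ZMod n) : Fin k → ZMod n :=
  fun j => if (j : ℕ) < i then x j else 0

lemma trunc_congr {n k i : ℕ} {x y : Fin k → ZMod n}
    (h : ∀ j : Fin k, (j : ℕ) < i → x j = y j) : trunc i x = trunc i y := by
  funext j
  by_cases hj : (j : ℕ) < i
  · simp [trunc, hj, h j hj]
  · simp [trunc, hj]

lemma trunc_succ_of_eq_zero {n k i : ℕ} (hi : i < k) {x : Fin k → ZMod n}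
    (h : x ⟨i, hi⟩ = 0) : trunc (i + 1) x = trunc i x := by
  funext j
  rcases lt_trichotomy (j : ℕ) i with hj | hj | hj
  · simp [trunc, hj, Nat.lt_succ_of_lt hj]
  · have : j = ⟨i, hi⟩ := Fin.ext hj
    subst this
    simp [trunc, h]
  · have h1 : ¬ (j : ℕ) < i + 1 := by omega
    have h2 : ¬ (j : ℕ) < i := by omega
    simp [trunc, h1, h2]

/-- The root of a copy is adjacent to each of its peripheral vertices. Rule (2) provides the edge,
except in copies of `H_{n,1}`, where it comes from rule (1). -/
lemma hierGraph_adj_trunc {n k i : ℕ} (hi : i < k) {y : Fin k → ZMod n}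
    (hy : ∀ j : Fin k, i ≤ (j : ℕ) → y j ≠ 0) : (hierGraph n k).Adj (trunc i y) y := by
  have hne : trunc i y ≠ y := fun h => hy ⟨i, hi⟩ le_rfl (by rw [← h]; simp [trunc])
  rw [hierGraph, SimpleGraph.fromRel_adj]
  refine ⟨hne, Or.inl ?_⟩
  by_cases hik : i + 2 ≤ k
  · refine Or.inr (Or.inl ⟨i, hik, fun j hj => by simp [trunc, hj], fun j hj => ?_, hy⟩)
    simp [trunc, Nat.not_lt.mpr hj]
  · refine Or.inl ⟨hne, fun j hj => ?_⟩
    have : (j : ℕ) < i := by omega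
    simp [trunc, this]

/-- The roots of two sub-copies selected by distinct nonzero coordinates are adjacent. Rule (3)
provides the edge, except when the sub-copies are single vertices, where it comes from rule (1). -/
lemma hierGraph_adj_trunc_trunc {n k : ℕ} {x y : Fin k → ZMod n} {p : Fin k}
    (hxy : ∀ j : Fin k, (j : ℕ) < p → x j = y j) (hx : x p ≠ 0) (hy : y p ≠ 0)
    (hne : x p ≠ y p) :
    (hierGraph n k).Adj (trunc ((p : ℕ) + 1) x) (trunc ((p : ℕ) + 1) y) := by
  have hp : ∀ z : Fin k → ZMod n, trunc ((p : ℕ) + 1) z p = z p := fun z => by simp [trunc]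
  have hlt : ∀ j : Fin k, (j : ℕ) < p →
      trunc ((p : ℕ) + 1) x j = trunc ((p : ℕ) + 1) y j := fun j hj => by
    simp [trunc, hxy j hj]
  have hgt : ∀ (z : Fin k → ZMod n) (j : Fin k), p < j → trunc ((p : ℕ) + 1) z j = 0 :=
    fun z j hj => by
      have : ¬ (j : ℕ) < p + 1 := by have : (p : ℕ) < j := hj; omega
      simp [trunc, this]
  have htne : trunc ((p : ℕ) + 1) x ≠ trunc ((p : ℕ) + 1) y := fun h =>
    hne (by rw [← hp x, ← hp y, h])
  rw [hierGraph, SimpleGraph.fromRel_adj]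
  refine ⟨htne, Or.inl ?_⟩
  by_cases hpk : (p : ℕ) + 2 ≤ k
  · refine Or.inr (Or.inr ⟨p, hpk, hlt, ?_, ?_, ?_, fun j hj => ⟨hgt x j hj, hgt y j hj⟩⟩)
    · rwa [hp]
    · rwa [hp]
    · rwa [hp, hp]
  · exact Or.inl ⟨htne, fun j hj => hlt j (by omega)⟩

/-- In the copy of `H_{n,m}` containing `x`, both the root and some peripheral vertex are within
`m` steps of `x`. The two bounds need each other in the induction. -/
lemma exists_walk_trunc_and_peripheral {n k : ℕ} (hn : 2 ≤ n) (m : ℕ) :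
    ∀ i : ℕ, i + m = k → ∀ x : Fin k → ZMod n,
      (∃ w : (hierGraph n k).Walk x (trunc i x), w.length ≤ m) ∧
      ∃ y : Fin k → ZMod n, (∀ j : Fin k, (j : ℕ) < i → x j = y j) ∧
        (∀ j : Fin k, i ≤ (j : ℕ) → y j ≠ 0) ∧
        ∃ w : (hierGraph n k).Walk x y, w.length ≤ m := by
  induction m with
  | zero =>
    intro i hi x
    have hx : x = trunc i x := by
      funext j
      have : (j : ℕ) < i := by omega
      simp [trunc, this]
    refine ⟨⟨SimpleGraph.Walk.nil.copy rfl hx, by simp⟩, x, fun _ _ => rfl,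
      fun j hj => by omega, SimpleGraph.Walk.nil, by simp⟩
  | succ m ih =>
    intro i hi x
    have hik : i < k := by omega
    have : Fact (1 < n) := ⟨hn⟩
    obtain ⟨hroot, y, hxy, hy, v, hv⟩ := ih (i + 1) (by omega) x
    by_cases h0 : x ⟨i, hik⟩ = 0
    · rw [trunc_succ_of_eq_zero hik h0] at hroot
      obtain ⟨w, hw⟩ := hroot
      let z : Fin k → ZMod n := fun j => if (j : ℕ) < i then x j else 1
      have hxz : ∀ j : Fin k, (j : ℕ) < i → x j = z j := fun j hj => by simp [z, hj]
      have hz : ∀ j : Fin k, i ≤ (j : ℕ) → z j ≠ 0 := fun j hj => by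
        simp [z, Nat.not_lt.mpr hj]
      have hadj := hierGraph_adj_trunc hik hz
      rw [← trunc_congr hxz] at hadj
      exact ⟨⟨w, by omega⟩, z, hxz, hz, w.concat hadj, by
        rw [SimpleGraph.Walk.length_concat]; omega⟩
    · have hxy' : ∀ j : Fin k, (j : ℕ) < i → x j = y j := fun j hj => hxy j (by omega)
      have hy' : ∀ j : Fin k, i ≤ (j : ℕ) → y j ≠ 0 := fun j hj => by
        rcases hj.eq_or_lt with h | h
        · have hji : j = ⟨i, hik⟩ := Fin.ext h.symm
          rw [← hxy j (by omega), hji]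
          exact h0
        · exact hy j h
      have hadj := (hierGraph_adj_trunc hik hy').symm
      rw [← trunc_congr hxy'] at hadj
      exact ⟨⟨v.concat hadj, by rw [SimpleGraph.Walk.length_concat]; omega⟩,
        y, hxy', hy', v, by omega⟩

lemma dist_le_of_walk_adj_walk {V : Type*} {G : SimpleGraph V} {x a b y : V} {m : ℕ}
    (hx : ∃ w : G.Walk x a, w.length ≤ m) (hab : G.Adj a b)
    (hy : ∃ w : G.Walk y b, w.length ≤ m) : G.dist x y ≤ 2 * m + 1 := by
  obtain ⟨u, hu⟩ := hx
  obtain ⟨v, hv⟩ := hy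
  refine (SimpleGraph.dist_le ((u.concat hab).append v.reverse)).trans ?_
  rw [SimpleGraph.Walk.length_append, SimpleGraph.Walk.length_concat,
    SimpleGraph.Walk.length_reverse]
  omega

/-- The case of the theorem in which the first differing coordinate of `x` is `0`: the root of the
sub-copy of `x` is the root of the whole copy, hence adjacent to the periphery of the sub-copy of
`y`. -/
lemma dist_le_of_eq_zero {n k : ℕ} (hn : 2 ≤ n) {x y : Fin k → ZMod n} {p : Fin k}
    (hxy : ∀ j : Fin k, (j : ℕ) < p → x j = y j) (hx : x p = 0) (hy : y p ≠ 0) :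
    (hierGraph n k).dist x y ≤ 2 * (k - (p + 1)) + 1 := by
  have hpk := p.isLt
  obtain ⟨hwx, -⟩ :=
    exists_walk_trunc_and_peripheral hn (k - (p + 1)) (p + 1) (by omega) x
  obtain ⟨-, z, hyz, hz, hwy⟩ :=
    exists_walk_trunc_and_peripheral hn (k - (p + 1)) (p + 1) (by omega) y
  have hz' : ∀ j : Fin k, (p : ℕ) ≤ (j : ℕ) → z j ≠ 0 := fun j hj => by
    rcases hj.eq_or_lt with h | h
    · have hjp : j = p := Fin.ext h.symm
      rw [← hyz j (by omega), hjp]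
      exact hy
    · exact hz j h
  have hadj := hierGraph_adj_trunc hpk hz'
  have hxz : ∀ j : Fin k, (j : ℕ) < p → x j = z j := fun j hj =>
    (hxy j hj).trans (hyz j (by omega))
  rw [← trunc_congr hxz, ← trunc_succ_of_eq_zero hpk hx] at hadj
  exact dist_le_of_walk_adj_walk hwx hadj hwy

/-- if distinct vertices `x, y` of `H_{n,k}` agree in their first
`i` coordinates (`0 ≤ i ≤ k-1`), then their distance is at most `2(k-i) - 1`. -/
theorem hierGraph_dist_le_of_common_prefix (n k : ℕ) (hn : 2 ≤ n) (hk : 1 ≤ k)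
    (i : ℕ) (hi : i + 1 ≤ k) (x y : Fin k → ZMod n) (hxy : x ≠ y)
    (hagree : ∀ j : Fin k, (j : ℕ) < i → x j = y j) :
    (hierGraph n k).dist x y ≤ 2 * (k - i) - 1 := by
  classical
  obtain ⟨p, hp, hmin⟩ : ∃ p : Fin k, x p ≠ y p ∧ ∀ j : Fin k, (j : ℕ) < p → x j = y j := by
    obtain ⟨p, hp, hmin⟩ := WellFounded.has_min (wellFounded_lt (α := Fin k)) {j | x j ≠ y j}
      (Function.ne_iff.mp hxy)
    exact ⟨p, hp, fun j hj => by_contra fun h => hmin j h hj⟩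
  have hip : i ≤ (p : ℕ) := by
    by_contra h
    exact hp (hagree p (by omega))
  have hpk := p.isLt
  have key : (hierGraph n k).dist x y ≤ 2 * (k - (p + 1)) + 1 := by
    by_cases hx : x p = 0
    · exact dist_le_of_eq_zero hn hmin hx fun hy => hp (hx.trans hy.symm)
    by_cases hy : y p = 0
    · rw [SimpleGraph.dist_comm]
      exact dist_le_of_eq_zero hn (fun j hj => (hmin j hj).symm) hy hx
    · exact dist_le_of_walk_adj_walk
        (exists_walk_trunc_and_peripheral hn _ (p + 1) (by omega) x).1
        (hierGraph_adj_trunc_trunc hmin hx hy hp)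
        (exists_walk_trunc_and_peripheral hn _ (p + 1) (by omega) y).1
  omega
end

section
/- Let r = 00…0 be the root of the hierarchical graph H_{n,k}. For any vertex x of H_{n,k}: if the first coordinate of x is 0, then the graph distance from x to r is at most k − 1; otherwise, the graph distance from x to r is at most k. -/
/-- Vertices that agree before position `i`, one being zero and the other nowhere zero from `i` on,
are adjacent. -/
theorem hierGraph_adj_of_tail {n k : ℕ} {x y : Fin k → ZMod n} (i : ℕ) (hi : i < k)
    (hpre : ∀ j : Fin k, (j : ℕ) < i → x j = y j)
    (hx : ∀ j : Fin k, i ≤ (j : ℕ) → x j = 0) (hy : ∀ j : Fin k, i ≤ (j : ℕ) → y j ≠ 0) :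
    (hierGraph n k).Adj x y := by
  have hne : x ≠ y := by
    intro h
    exact hy ⟨i, hi⟩ le_rfl (h ▸ hx ⟨i, hi⟩ le_rfl)
  refine (SimpleGraph.fromRel_adj _ _ _).2 ⟨hne, Or.inl ?_⟩
  by_cases h2 : i + 2 ≤ k
  · exact Or.inr (Or.inl ⟨i, h2, hpre, hx, hy⟩)
  · exact Or.inl ⟨hne, fun j hj => hpre j (by omega)⟩

/-- The bound for a vertex whose tail from position `m` is homogeneous. It is phrased with walks
because `SimpleGraph.dist` is `0` between vertices that are not connected. -/
theorem hierGraph_exists_walk (n k : ℕ) (hn : 2 ≤ n) (hk : 0 < k) (m : ℕ) (hm : m < k)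
    (x : Fin k → ZMod n)
    (hx : (∀ j : Fin k, m ≤ (j : ℕ) → x j = 0) ∨ (∀ j : Fin k, m ≤ (j : ℕ) → x j ≠ 0)) :
    ∃ w : (hierGraph n k).Walk x (hierRoot n k),
      w.length ≤ m + (if x ⟨0, hk⟩ = 0 then 0 else 1) := by
  have : Fact (1 < n) := ⟨hn⟩
  induction m generalizing x with
  | zero =>
    rcases hx with hx | hx
    · obtain rfl : x = hierRoot n k := funext fun j => hx j (Nat.zero_le _)
      exact ⟨SimpleGraph.Walk.nil, by simp⟩
    · have hadj : (hierGraph n k).Adj (hierRoot n k) x :=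
        hierGraph_adj_of_tail 0 hk (fun j hj => absurd hj (Nat.not_lt_zero _))
          (fun _ _ => rfl) hx
      exact ⟨SimpleGraph.Walk.cons hadj.symm SimpleGraph.Walk.nil, by
        simp [hx ⟨0, hk⟩ le_rfl]⟩
  | succ m ih =>
    have hm' : m < k := by omega
    -- A vertex `y` reached by one edge, with unchanged coordinates up to `m`, suffices.
    have step : ∀ y : Fin k → ZMod n, (hierGraph n k).Adj x y →
        (∀ j : Fin k, (j : ℕ) < m + 1 → x j = y j) →
        ((∀ j : Fin k, m ≤ (j : ℕ) → y j = 0) ∨ (∀ j : Fin k, m ≤ (j : ℕ) → y j ≠ 0)) →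
        ∃ w : (hierGraph n k).Walk x (hierRoot n k),
          w.length ≤ m + 1 + (if x ⟨0, hk⟩ = 0 then 0 else 1) := by
      intro y hadj hpre hy
      obtain ⟨w, hw⟩ := ih hm' y hy
      rw [← hpre ⟨0, hk⟩ (Nat.succ_pos m)] at hw
      exact ⟨SimpleGraph.Walk.cons hadj w, by rw [SimpleGraph.Walk.length_cons]; omega⟩
    have stay : ((∀ j : Fin k, m ≤ (j : ℕ) → x j = 0) ∨ (∀ j : Fin k, m ≤ (j : ℕ) → x j ≠ 0)) →
        ∃ w : (hierGraph n k).Walk x (hierRoot n k),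
          w.length ≤ m + 1 + (if x ⟨0, hk⟩ = 0 then 0 else 1) := by
      intro h
      obtain ⟨w, hw⟩ := ih hm' x h
      exact ⟨w, by omega⟩
    have split : ∀ j : Fin k, m ≤ (j : ℕ) → j = ⟨m, hm'⟩ ∨ m + 1 ≤ (j : ℕ) := by
      intro j hj
      rcases Nat.eq_or_lt_of_le hj with h | h
      · exact Or.inl (Fin.ext h.symm)
      · exact Or.inr h
    rcases hx with hx | hx <;> by_cases h0 : x ⟨m, hm'⟩ = 0
    · refine stay (Or.inl fun j hj => ?_)
      rcases split j hj with rfl | h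
      exacts [h0, hx j h]
    · have hpre : ∀ j : Fin k, (j : ℕ) < m + 1 → x j = if (j : ℕ) < m + 1 then x j else 1 :=
        fun j hj => (if_pos hj).symm
      have htail : ∀ j : Fin k, m + 1 ≤ (j : ℕ) →
          (if (j : ℕ) < m + 1 then x j else 1) ≠ 0 := by
        intro j hj
        rw [if_neg (by omega)]
        exact one_ne_zero
      refine step (fun j => if (j : ℕ) < m + 1 then x j else 1)
        (hierGraph_adj_of_tail (m + 1) hm hpre hx htail) hpre (Or.inr fun j hj => ?_)
      rcases split j hj with rfl | h
      · simpa using h0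
      · exact htail j h
    · have hpre : ∀ j : Fin k, (j : ℕ) < m + 1 → x j = if (j : ℕ) < m + 1 then x j else 0 :=
        fun j hj => (if_pos hj).symm
      have htail : ∀ j : Fin k, m + 1 ≤ (j : ℕ) →
          (if (j : ℕ) < m + 1 then x j else 0) = 0 :=
        fun j hj => if_neg (by omega)
      refine step (fun j => if (j : ℕ) < m + 1 then x j else 0)
        (hierGraph_adj_of_tail (m + 1) hm (fun j hj => (hpre j hj).symm) htail hx).symm
        hpre (Or.inl fun j hj => ?_)
      rcases split j hj with rfl | h
      · simpa using h0
      · exact htail j h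
    · refine stay (Or.inr fun j hj => ?_)
      rcases split j hj with rfl | h
      exacts [h0, hx j h]

/-- for any vertex `x` of `H_{n,k}`, its distance to the root is at
most `k - 1` if its first coordinate is `0`, and at most `k` otherwise. -/
theorem hierGraph_dist_to_root_le (n k : ℕ) (hn : 2 ≤ n) (hk : 0 < k)
    (x : Fin k → ZMod n) :
    (x ⟨0, hk⟩ = 0 → (hierGraph n k).dist x (hierRoot n k) ≤ k - 1) ∧
      (x ⟨0, hk⟩ ≠ 0 → (hierGraph n k).dist x (hierRoot n k) ≤ k) := by
  have hlast : ∀ j : Fin k, k - 1 ≤ (j : ℕ) → j = ⟨k - 1, by omega⟩ :=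
    fun j hj => Fin.ext (by simp only; omega)
  obtain ⟨w, hw⟩ := hierGraph_exists_walk n k hn hk (k - 1) (by omega) x (by
    by_cases h : x ⟨k - 1, by omega⟩ = 0
    · exact Or.inl fun j hj => hlast j hj ▸ h
    · exact Or.inr fun j hj => hlast j hj ▸ h)
  have hd := SimpleGraph.dist_le w
  constructor
  · intro h
    rw [if_pos h] at hw
    omega
  · intro h
    rw [if_neg h] at hw
    omega
end

section
/- Let P be the set of peripheral vertices of the hierarchical graph H_{n,k}, i.e., the vertices all of whose coordinates are nonzero. For any vertex x of H_{n,k}: if the first coordinate of x is 0, then the minimum graph distance from x to a vertex of P is at most k; otherwise, the minimum graph distance from x to a vertex of P is at most k − 1. -/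
/-- Replacing a suffix of zeros by a suffix of nonzero entries is an edge: rule (1) covers a suffix of
length one and rule (2) all longer ones. -/
theorem hierGraph_adj_of_suffix {n k : ℕ} {x y : Fin k → ZMod n} (i : ℕ) (hi : i < k)
    (hxy : ∀ j : Fin k, (j : ℕ) < i → x j = y j)
    (hx : ∀ j : Fin k, i ≤ (j : ℕ) → x j = 0)
    (hy : ∀ j : Fin k, i ≤ (j : ℕ) → y j ≠ 0) : (hierGraph n k).Adj x y := by
  have hne : x ≠ y := fun h => hy ⟨i, hi⟩ le_rfl (h ▸ hx ⟨i, hi⟩ le_rfl)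
  refine (SimpleGraph.fromRel_adj _ _ _).2 ⟨hne, Or.inl ?_⟩
  by_cases h2 : i + 2 ≤ k
  · exact Or.inr (Or.inl ⟨i, h2, hxy, hx, hy⟩)
  · exact Or.inl ⟨hne, fun j hj => hxy j (by omega)⟩

/-- If the coordinates of `x` from position `i` on are all zero or all nonzero, then a peripheral
vertex can be reached in `i` steps, plus one if the first coordinate of `x` vanishes. -/
theorem exists_walk_to_peripheral {n k : ℕ} (hn : 2 ≤ n) (hk : 0 < k) (i : ℕ) (hi : i < k)
    (x : Fin k → ZMod n)
    (hx : (∀ j : Fin k, i ≤ (j : ℕ) → x j = 0) ∨ (∀ j : Fin k, i ≤ (j : ℕ) → x j ≠ 0)) :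
    ∃ p ∈ peripheral n k, ∃ w : (hierGraph n k).Walk x p,
      w.length ≤ i + (if x ⟨0, hk⟩ = 0 then 1 else 0) := by
  have : Fact (1 < n) := ⟨hn⟩
  induction i generalizing x with
  | zero =>
    rcases hx with hx | hx
    · have hadj : (hierGraph n k).Adj x (fun _ => 1) :=
        hierGraph_adj_of_suffix 0 hi (fun j hj => absurd hj (Nat.not_lt_zero _)) hx
          (fun _ _ => one_ne_zero)
      exact ⟨fun _ => 1, fun _ => one_ne_zero, hadj.toWalk,
        by simp [hx ⟨0, hk⟩ (Nat.zero_le _)]⟩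
    · exact ⟨x, fun j => hx j (Nat.zero_le _), SimpleGraph.Walk.nil, by simp⟩
  | succ i ih =>
    have hi' : i < k := by omega
    -- One step from `x` to a vertex `y` whose uniform suffix starts at position `i`.
    have step : ∀ y : Fin k → ZMod n, (hierGraph n k).Adj x y →
        (∀ j : Fin k, (j : ℕ) < i + 1 → y j = x j) →
        ((∀ j : Fin k, i ≤ (j : ℕ) → y j = 0) ∨ (∀ j : Fin k, i ≤ (j : ℕ) → y j ≠ 0)) →
        ∃ p ∈ peripheral n k, ∃ w : (hierGraph n k).Walk x p,
          w.length ≤ i + 1 + (if x ⟨0, hk⟩ = 0 then 1 else 0) := by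
      intro y hadj hyx hy
      obtain ⟨p, hp, w, hw⟩ := ih hi' y hy
      rw [hyx ⟨0, hk⟩ (Nat.succ_pos i)] at hw
      exact ⟨p, hp, w.cons hadj, by rw [SimpleGraph.Walk.length_cons]; omega⟩
    -- If coordinate `i` already has the type of the suffix, no step is needed.
    have stay : ((∀ j : Fin k, i ≤ (j : ℕ) → x j = 0) ∨ (∀ j : Fin k, i ≤ (j : ℕ) → x j ≠ 0)) →
        ∃ p ∈ peripheral n k, ∃ w : (hierGraph n k).Walk x p,
          w.length ≤ i + 1 + (if x ⟨0, hk⟩ = 0 then 1 else 0) := by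
      intro h
      obtain ⟨p, hp, w, hw⟩ := ih hi' x h
      exact ⟨p, hp, w, by omega⟩
    have split : ∀ j : Fin k, i ≤ (j : ℕ) → j = ⟨i, hi'⟩ ∨ i + 1 ≤ (j : ℕ) := by
      intro j hj
      rcases hj.eq_or_lt with h | h
      · exact Or.inl (Fin.ext h.symm)
      · exact Or.inr h
    by_cases hxi : x ⟨i, hi'⟩ = 0
    · rcases hx with hx | hx
      · refine stay (Or.inl fun j hj => ?_)
        rcases split j hj with rfl | h
        exacts [hxi, hx j h]
      · refine step (fun j => if (j : ℕ) < i + 1 then x j else 0) ?_ (fun j hj => if_pos hj)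
          (Or.inl fun j hj => ?_)
        · refine (hierGraph_adj_of_suffix (i + 1) hi (fun j hj => if_pos hj)
            (fun j hj => if_neg (by omega)) hx).symm
        · rcases split j hj with rfl | h
          · simpa using hxi
          · exact if_neg (by omega)
    · rcases hx with hx | hx
      · refine step (fun j => if (j : ℕ) < i + 1 then x j else 1) ?_ (fun j hj => if_pos hj)
          (Or.inr fun j hj => ?_)
        · refine hierGraph_adj_of_suffix (i + 1) hi (fun j hj => (if_pos hj).symm) hx
            (fun j hj => ?_)
          rw [if_neg (by omega)]
          exact one_ne_zero
        · rcases split j hj with rfl | h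
          · simpa using hxi
          · rw [if_neg (by omega)]
            exact one_ne_zero
      · refine stay (Or.inr fun j hj => ?_)
        rcases split j hj with rfl | h
        exacts [hxi, hx j h]

/-- for any vertex `x` of `H_{n,k}`, its minimum distance to the set
`P` of peripheral vertices is at most `k` if its first coordinate is `0`, and at
most `k - 1` otherwise. -/
theorem hierGraph_dist_to_peripheral_le (n k : ℕ) (hn : 2 ≤ n) (hk : 0 < k)
    (x : Fin k → ZMod n) :
    (x ⟨0, hk⟩ = 0 → distToSet (hierGraph n k) x (peripheral n k) ≤ k) ∧
      (x ⟨0, hk⟩ ≠ 0 → distToSet (hierGraph n k) x (peripheral n k) ≤ k - 1) := by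
  -- The suffix consisting of the last coordinate alone is always uniform.
  have hlast : (∀ j : Fin k, k - 1 ≤ (j : ℕ) → x j = 0) ∨
      (∀ j : Fin k, k - 1 ≤ (j : ℕ) → x j ≠ 0) := by
    have hj : ∀ j : Fin k, k - 1 ≤ (j : ℕ) → j = ⟨k - 1, by omega⟩ :=
      fun j h => Fin.ext (by simp only; omega)
    by_cases h : x ⟨k - 1, by omega⟩ = 0
    · exact Or.inl fun j h' => by rw [hj j h']; exact h
    · exact Or.inr fun j h' => by rw [hj j h']; exact h
  obtain ⟨p, hp, w, hw⟩ := exists_walk_to_peripheral hn hk (k - 1) (by omega) x hlast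
  have hd : distToSet (hierGraph n k) x (peripheral n k) ≤ w.length :=
    (Nat.sInf_le (Set.mem_image_of_mem _ hp)).trans (SimpleGraph.dist_le w)
  constructor
  · intro h0
    rw [if_pos h0] at hw
    omega
  · intro h0
    rw [if_neg h0] at hw
    omega
end

section
/- In the hierarchical graph H_{n,k}, let z^{01} be the vertex whose j-th coordinate is 0 for odd j and 1 for even j, let z^{10} be the vertex whose j-th coordinate is 1 for odd j and 0 for even j, let r = 00…0 be the root, and let P be the set of vertices all of whose coordinates are nonzero. Then the graph distance from z^{01} to r equals k − 1, and the minimum graph distance from z^{10} to a vertex of P equals k − 1. -/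
open Classical in
/-- The positions `t` (0-indexed) such that exactly one of the coordinates `t`, `t + 1` of `x`
vanishes. -/
noncomputable def chg {n k : ℕ} (x : Fin k → ZMod n) : Finset ℕ :=
  (Finset.range (k - 1)).filter fun t =>
    ∃ h : t + 1 < k, ¬ (x ⟨t, by omega⟩ = 0 ↔ x ⟨t + 1, h⟩ = 0)

theorem mem_chg {n k : ℕ} (x : Fin k → ZMod n) (t : ℕ) :
    t ∈ chg x ↔ ∃ h : t + 1 < k, ¬ (x ⟨t, by omega⟩ = 0 ↔ x ⟨t + 1, h⟩ = 0) := by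
  simp only [chg, Finset.mem_filter, Finset.mem_range]
  constructor
  · exact fun h => h.2
  · exact fun h => ⟨by have := h.1; omega, h⟩

/-- Each rule affects the switching positions only at the boundary of a single suffix. -/
theorem chg_rule {n k : ℕ} {x y : Fin k → ZMod n} (h : rule1 x y ∨ rule2 x y ∨ rule3 x y) :
    ∃ i : ℕ, ∀ t : ℕ, t + 1 ≠ i → (t ∈ chg x ↔ t ∈ chg y) := by
  rcases h with ⟨-, h⟩ | ⟨i, -, h1, h2, h3⟩ | ⟨p, -, h1, h2, h3, -, h4⟩
  · refine ⟨k - 1, fun t ht => ?_⟩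
    rw [mem_chg, mem_chg]
    refine exists_congr fun hk => ?_
    rw [h ⟨t, by omega⟩ hk, h ⟨t + 1, hk⟩ (by show t + 1 + 1 < k; omega)]
  · refine ⟨i, fun t ht => ?_⟩
    rw [mem_chg, mem_chg]
    refine exists_congr fun hk => ?_
    rcases Nat.lt_or_ge (t + 1) i with hi | hi
    · rw [h1 ⟨t, by omega⟩ (by show t < i; omega), h1 ⟨t + 1, hk⟩ hi]
    · have hi' : i ≤ t := by omega
      simp [h2 ⟨t, by omega⟩ hi', h2 ⟨t + 1, hk⟩ hi, h3 ⟨t, by omega⟩ hi', h3 ⟨t + 1, hk⟩ hi]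
  · -- Rule (3) preserves the zero pattern, so no position needs to be excluded.
    have key : ∀ j, x j = 0 ↔ y j = 0 := by
      intro j
      rcases lt_trichotomy j p with hj | rfl | hj
      · rw [h1 j hj]
      · simp [h2, h3]
      · simp [h4 j hj]
    refine ⟨0, fun t _ => ?_⟩
    rw [mem_chg, mem_chg]
    refine exists_congr fun hk => ?_
    rw [key, key]

theorem card_chg_le_of_adj {n k : ℕ} {x y : Fin k → ZMod n} (h : (hierGraph n k).Adj x y) :
    (chg x).card ≤ (chg y).card + 1 := by
  obtain ⟨i, hi⟩ : ∃ i : ℕ, ∀ t : ℕ, t + 1 ≠ i → (t ∈ chg x ↔ t ∈ chg y) := by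
    rcases h.2 with h | h
    · exact chg_rule h
    · obtain ⟨i, hi⟩ := chg_rule h
      exact ⟨i, fun t ht => (hi t ht).symm⟩
  have hsub : chg x ⊆ insert (i - 1) (chg y) := by
    intro t ht
    rw [Finset.mem_insert]
    by_cases hti : t + 1 = i
    · left; omega
    · right; exact (hi t hti).1 ht
  exact (Finset.card_le_card hsub).trans (Finset.card_insert_le _ _)

theorem card_chg_le_of_walk {n k : ℕ} {x y : Fin k → ZMod n} (w : (hierGraph n k).Walk x y) :
    (chg x).card ≤ (chg y).card + w.length := by
  induction w with
  | nil => simp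
  | cons h p ih =>
    have := card_chg_le_of_adj h
    rw [SimpleGraph.Walk.length_cons]
    omega

/-- Lower bound: from an everywhere switching vertex to a vertex with constant zero pattern. -/
theorem le_dist {n k : ℕ} {x y : Fin k → ZMod n} (hr : (hierGraph n k).Reachable x y)
    (hx : ∀ (t : ℕ) (h : t + 1 < k), ¬ (x ⟨t, by omega⟩ = 0 ↔ x ⟨t + 1, h⟩ = 0))
    (hy : ∀ i j, y i = 0 ↔ y j = 0) : k - 1 ≤ (hierGraph n k).dist x y := by
  obtain ⟨w, hw⟩ := hr.exists_walk_length_eq_dist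
  have h1 := card_chg_le_of_walk w
  have h2 : chg y = ∅ := by
    ext t
    rw [mem_chg]
    simpa using fun h => hy ⟨t, by omega⟩ ⟨t + 1, h⟩
  have h3 : chg x = Finset.range (k - 1) := by
    ext t
    rw [mem_chg, Finset.mem_range]
    exact ⟨fun h => by have := h.1; omega, fun h => ⟨by omega, hx t (by omega)⟩⟩
  rw [h2, h3, hw] at h1
  simpa using h1

/-- The vertex obtained from `x` by replacing every coordinate beyond position `i` by the
coordinate at position `i`. -/
def fold {n k : ℕ} (x : Fin k → ZMod n) (i : Fin k) : Fin k → ZMod n := fun j => x (min j i)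

theorem fold_adj {n k : ℕ} {x : Fin k → ZMod n}
    (hx : ∀ (t : ℕ) (h : t + 1 < k), ¬ (x ⟨t, by omega⟩ = 0 ↔ x ⟨t + 1, h⟩ = 0))
    (t : ℕ) (h : t + 1 < k) :
    (hierGraph n k).Adj (fold x ⟨t + 1, h⟩) (fold x ⟨t, by omega⟩) := by
  have hpre : ∀ j : Fin k, (j : ℕ) < t + 1 → fold x ⟨t + 1, h⟩ j = fold x ⟨t, by omega⟩ j := by
    intro j hj
    unfold fold
    congr 1
    rw [min_eq_left (Fin.le_def.2 (by show (j : ℕ) ≤ t + 1; omega)),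
      min_eq_left (Fin.le_def.2 (by show (j : ℕ) ≤ t; omega))]
  have hs1 : ∀ j : Fin k, t + 1 ≤ (j : ℕ) → fold x ⟨t + 1, h⟩ j = x ⟨t + 1, h⟩ := by
    intro j hj
    unfold fold
    rw [min_eq_right (Fin.le_def.2 hj)]
  have hs2 : ∀ j : Fin k, t + 1 ≤ (j : ℕ) → fold x ⟨t, by omega⟩ j = x ⟨t, by omega⟩ := by
    intro j hj
    unfold fold
    rw [min_eq_right (Fin.le_def.2 (by show t ≤ (j : ℕ); omega))]
  have hne : fold x ⟨t + 1, h⟩ ≠ fold x ⟨t, by omega⟩ := by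
    intro he
    have := congrFun he ⟨t + 1, h⟩
    rw [hs1 _ le_rfl, hs2 _ le_rfl] at this
    exact hx t h (by rw [this])
  refine ⟨hne, ?_⟩
  by_cases hk : t + 2 = k
  · exact Or.inl (Or.inl ⟨hne, fun j hj => hpre j (by omega)⟩)
  by_cases h0 : x ⟨t + 1, h⟩ = 0
  · have h1 : x ⟨t, by omega⟩ ≠ 0 := fun h1 => hx t h (by simp [h0, h1])
    exact Or.inl (Or.inr (Or.inl ⟨t + 1, by omega, hpre, fun j hj => by rw [hs1 j hj, h0],
      fun j hj => by rwa [hs2 j hj]⟩))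
  · have h1 : x ⟨t, by omega⟩ = 0 := by
      by_contra h1
      exact hx t h (by simp [h0, h1])
    exact Or.inr (Or.inr (Or.inl ⟨t + 1, by omega, fun j hj => (hpre j hj).symm,
      fun j hj => by rw [hs2 j hj, h1], fun j hj => by rwa [hs1 j hj]⟩))

/-- Upper bound: an everywhere switching vertex reaches the constant vertex with value its first
coordinate in `k - 1` steps. -/
theorem exists_walk_const {n k : ℕ} (hk : 1 ≤ k) {x : Fin k → ZMod n}
    (hx : ∀ (t : ℕ) (h : t + 1 < k), ¬ (x ⟨t, by omega⟩ = 0 ↔ x ⟨t + 1, h⟩ = 0)) :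
    ∃ w : (hierGraph n k).Walk x (fun _ => x ⟨0, hk⟩), w.length = k - 1 := by
  have main : ∀ (t : ℕ) (h : t < k),
      ∃ w : (hierGraph n k).Walk (fold x ⟨t, h⟩) (fold x ⟨0, hk⟩), w.length = t := by
    intro t
    induction t with
    | zero => exact fun h => ⟨.nil, rfl⟩
    | succ t ih =>
      intro h
      obtain ⟨w, hw⟩ := ih (by omega)
      exact ⟨.cons (fold_adj hx t h) w, by rw [SimpleGraph.Walk.length_cons, hw]⟩
  have e1 : fold x ⟨k - 1, by omega⟩ = x := by
    funext j
    unfold fold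
    rw [min_eq_left (Fin.le_def.2 (by show (j : ℕ) ≤ k - 1; omega))]
  have e2 : fold x ⟨0, hk⟩ = fun _ => x ⟨0, hk⟩ := by
    funext j
    unfold fold
    rw [min_eq_right (Fin.le_def.2 (Nat.zero_le _))]
  have := main (k - 1) (by omega)
  rwa [e1, e2] at this

theorem root_adj_peripheral {n k : ℕ} (hk : 1 ≤ k) {v : Fin k → ZMod n}
    (hv : v ∈ peripheral n k) : (hierGraph n k).Adj (hierRoot n k) v := by
  have hne : hierRoot n k ≠ v := fun h => hv ⟨0, hk⟩ (congrFun h ⟨0, hk⟩).symm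
  refine ⟨hne, Or.inl ?_⟩
  by_cases h : k = 1
  · -- Rule (2) needs `k ≥ 2`; for `k = 1` the single coordinate is changed by rule (1).
    exact Or.inl ⟨hne, fun j hj => by omega⟩
  · exact Or.inr (Or.inl ⟨0, by omega, fun j hj => by omega, fun _ _ => rfl, fun j _ => hv j⟩)

/-- `∂_k(z^{01}, r) = ∂_k(z^{10}, P) = k - 1`. -/
theorem hierGraph_dist_z01_root_and_z10_P (n k : ℕ) (hn : 2 ≤ n) (hk : 1 ≤ k) :
    (hierGraph n k).dist (z01 n k) (hierRoot n k) = k - 1 ∧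
      distToSet (hierGraph n k) (z10 n k) (peripheral n k) = k - 1 := by
  have : Fact (1 < n) := ⟨hn⟩
  have h01 : ∀ (t : ℕ) (h : t + 1 < k),
      ¬ (z01 n k ⟨t, by omega⟩ = 0 ↔ z01 n k ⟨t + 1, h⟩ = 0) := by
    intro t h
    rcases Nat.mod_two_eq_zero_or_one t with ht | ht <;> simp [z01, ht, Nat.add_mod]
  have h10 : ∀ (t : ℕ) (h : t + 1 < k),
      ¬ (z10 n k ⟨t, by omega⟩ = 0 ↔ z10 n k ⟨t + 1, h⟩ = 0) := by
    intro t h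
    rcases Nat.mod_two_eq_zero_or_one t with ht | ht <;> simp [z10, ht, Nat.add_mod]
  constructor
  · obtain ⟨w, hw⟩ : ∃ w : (hierGraph n k).Walk (z01 n k) (hierRoot n k), w.length = k - 1 :=
      exists_walk_const hk h01
    exact le_antisymm (hw ▸ SimpleGraph.dist_le w)
      (le_dist w.reachable h01 fun _ _ => Iff.rfl)
  · obtain ⟨w, hw⟩ := exists_walk_const hk h10
    have hP : (fun _ => z10 n k ⟨0, hk⟩) ∈ peripheral n k := fun _ => by simp [z10]
    have hmem := Set.mem_image_of_mem ((hierGraph n k).dist (z10 n k)) hP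
    refine le_antisymm ((Nat.sInf_le hmem).trans (hw ▸ SimpleGraph.dist_le w)) ?_
    refine le_csInf ⟨_, hmem⟩ ?_
    rintro _ ⟨v, hv, rfl⟩
    have hr : (hierGraph n k).Reachable (z10 n k) v :=
      w.reachable.trans
        ((root_adj_peripheral hk hP).symm.reachable.trans (root_adj_peripheral hk hv).reachable)
    exact le_dist hr h10 fun i j => by simp [hv i, hv j]
end

section
/- The degree of the root vertex r = 00…0 in the hierarchical graph H_{n,k} equals ∑_{i=1}^{k} (n−1)^i, i.e., (n−1) + (n−1)^2 + … + (n−1)^k (which for n ≥ 3 equals ((n−1)^{k+1} − (n−1))/(n−2)). -/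
/-- The vertices whose last `i` coordinates are nonzero and whose other coordinates vanish. -/
def tailVerts (n k : ℕ) [NeZero n] (i : ℕ) : Finset (Fin k → ZMod n) :=
  Fintype.piFinset fun j : Fin k => if (j : ℕ) + i < k then {0} else {0}ᶜ

theorem mem_tailVerts {n k i : ℕ} [NeZero n] {y : Fin k → ZMod n} :
    y ∈ tailVerts n k i ↔
      ∀ j : Fin k, ((j : ℕ) + i < k → y j = 0) ∧ (k ≤ (j : ℕ) + i → y j ≠ 0) := by
  simp only [tailVerts, Fintype.mem_piFinset]
  refine forall_congr' fun j => ?_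
  split_ifs with h
  · simp [h, Nat.not_le.mpr h]
  · simp [h, Nat.not_lt.mp h]

theorem card_tailVerts {n k i : ℕ} [NeZero n] (hi : i ≤ k) :
    (tailVerts n k i).card = (n - 1) ^ i := by
  have h1 : (tailVerts n k i).card =
      ∏ j : Fin k, (fun j : ℕ => if j + i < k then 1 else n - 1) (j : ℕ) := by
    rw [tailVerts, Fintype.card_piFinset]
    refine Finset.prod_congr rfl fun j _ => ?_
    dsimp only
    split_ifs with h
    · simp
    · rw [Finset.card_compl, ZMod.card, Finset.card_singleton]
  rw [h1, Fin.prod_univ_eq_prod_range (fun j : ℕ => if j + i < k then 1 else n - 1) k]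
  obtain ⟨d, rfl⟩ := Nat.exists_eq_add_of_le' hi
  rw [Finset.prod_range_add]
  have h2 : ∀ x ∈ Finset.range d, (if x + i < d + i then 1 else n - 1) = 1 := by
    intro x hx
    have := Finset.mem_range.mp hx
    rw [if_pos (by omega)]
  have h3 : ∀ x ∈ Finset.range i, (if d + x + i < d + i then 1 else n - 1) = n - 1 := by
    intro x _
    rw [if_neg (by omega)]
  rw [Finset.prod_congr rfl h2, Finset.prod_congr rfl h3]
  simp

theorem adj_hierRoot_iff {n k : ℕ} [NeZero n] (hk : 1 ≤ k) (y : Fin k → ZMod n) :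
    (hierGraph n k).Adj (hierRoot n k) y ↔ ∃ i ∈ Finset.Icc 1 k, y ∈ tailVerts n k i := by
  simp only [Finset.mem_Icc, mem_tailVerts, hierGraph, SimpleGraph.fromRel_adj]
  constructor
  · -- Rule (1) is symmetric, so one argument serves both orders of its two vertices.
    have key : hierRoot n k ≠ y → (∀ j : Fin k, (j : ℕ) + 1 < k → y j = 0) →
        ∃ i, (1 ≤ i ∧ i ≤ k) ∧
          ∀ j : Fin k, ((j : ℕ) + i < k → y j = 0) ∧ (k ≤ (j : ℕ) + i → y j ≠ 0) := by
      intro hne h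
      refine ⟨1, ⟨le_rfl, hk⟩, fun j => ⟨h j, fun hj h0 => hne (funext fun l => ?_)⟩⟩
      by_cases hl : (l : ℕ) + 1 < k
      · exact (h l hl).symm
      · have : l = j := Fin.ext (by omega)
        rw [this, h0, hierRoot]
    rintro ⟨hne, (h | ⟨i, hi, h1, -, h3⟩ | ⟨p, -, -, h, -⟩) |
      (h | ⟨i, hi, -, -, h⟩ | ⟨p, -, -, -, h, -⟩)⟩
    · exact key hne fun j hj => (h.2 j hj).symm
    · exact ⟨k - i, ⟨by omega, by omega⟩, fun j =>
        ⟨fun hj => (h1 j (by omega)).symm, fun hj => h3 j (by omega)⟩⟩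
    · exact absurd rfl h
    · exact key hne h.2
    · -- The last coordinate of the root would have to be nonzero.
      exact absurd rfl (h ⟨k - 1, by omega⟩ (by dsimp only; omega))
    · exact absurd rfl h
  · rintro ⟨i, ⟨hi1, hik⟩, h⟩
    have hne : hierRoot n k ≠ y := by
      intro he
      exact (h ⟨k - 1, by omega⟩).2 (by dsimp only; omega) (congrFun he _).symm
    refine ⟨hne, Or.inl ?_⟩
    obtain rfl | hi2 : i = 1 ∨ 2 ≤ i := by omega
    · exact Or.inl ⟨hne, fun j hj => ((h j).1 hj).symm⟩
    · exact Or.inr (Or.inl ⟨k - i, by omega, fun j hj => ((h j).1 (by omega)).symm,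
        fun _ _ => rfl, fun j hj => (h j).2 (by omega)⟩)

theorem disjoint_tailVerts {n k i i' : ℕ} [NeZero n] (hlt : i < i') (hi' : i' ≤ k) :
    Disjoint (tailVerts n k i) (tailVerts n k i') := by
  rw [Finset.disjoint_left]
  intro y hy hy'
  rw [mem_tailVerts] at hy' hy
  -- The first of the last `i'` coordinates is zero for `i` and nonzero for `i'`.
  exact (hy' ⟨k - i', by omega⟩).2 (by dsimp only; omega)
    ((hy ⟨k - i', by omega⟩).1 (by dsimp only; omega))

/-- the degree of the root of `H_{n,k}` equals `∑_{i=1}^k (n-1)^i`. -/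
theorem hierGraph_degree_root (n k : ℕ) (hn : 2 ≤ n) (hk : 1 ≤ k) :
    vdeg (hierGraph n k) (hierRoot n k) = ∑ i ∈ Finset.Icc 1 k, (n - 1) ^ i := by
  have : NeZero n := ⟨by omega⟩
  have hset : (hierGraph n k).neighborSet (hierRoot n k) =
      ((Finset.Icc 1 k).biUnion (tailVerts n k) : Finset (Fin k → ZMod n)) := by
    ext y
    rw [SimpleGraph.mem_neighborSet, adj_hierRoot_iff hk, Finset.mem_coe, Finset.mem_biUnion]
  rw [vdeg, hset, Set.ncard_coe_finset, Finset.card_biUnion]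
  · exact Finset.sum_congr rfl fun i hi => card_tailVerts (Finset.mem_Icc.mp hi).2
  · intro i hi i' hi' hne
    rw [Finset.mem_coe, Finset.mem_Icc] at hi hi'
    rcases lt_or_gt_of_ne hne with h | h
    · exact disjoint_tailVerts h hi'.2
    · exact (disjoint_tailVerts h hi.2).symm
end

section
/- Let 1 ≤ i ≤ k−1 and let v be a vertex of the hierarchical graph H_{n,k} of the form v = x_1…x_i 0…0 with x_i ≠ 0 (i.e., the i-th coordinate of v is nonzero and all coordinates after the i-th are zero); such v is the root of a subgraph copy of H_{n,k−i}. Then the degree of v in H_{n,k} equals ∑_{j=1}^{k−i} (n−1)^j + (n−2) (which for n ≥ 3 equals ((n−1)^{k−i+1} − (n−1))/(n−2) + (n−2)). -/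
/-- The vertices that agree with `v` on the first `k - m` coordinates and have nonzero entries in
the last `m` coordinates. -/
def tailBox {n k : ℕ} [NeZero n] (v : Fin k → ZMod n) (m : ℕ) : Finset (Fin k → ZMod n) :=
  Fintype.piFinset fun j => if (j : ℕ) < k - m then {v j} else Finset.univ.erase 0

/-- The vertices obtained from `v` by replacing the entry at `p` by one that is neither `0` nor
`v p`. -/
def siblingBox {n k : ℕ} [NeZero n] (v : Fin k → ZMod n) (p : Fin k) :
    Finset (Fin k → ZMod n) :=
  Fintype.piFinset fun j => if j = p then (Finset.univ.erase 0).erase (v j) else {v j}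

lemma mem_tailBox {n k : ℕ} [NeZero n] (v y : Fin k → ZMod n) (m : ℕ) :
    y ∈ tailBox v m ↔ (∀ j : Fin k, (j : ℕ) < k - m → y j = v j) ∧
      (∀ j : Fin k, k - m ≤ (j : ℕ) → y j ≠ 0) := by
  unfold tailBox
  rw [Fintype.mem_piFinset, ← forall_and]
  refine forall_congr' fun j => ?_
  split_ifs with h
  · simp only [Finset.mem_singleton, h, true_imp_iff, not_le.mpr h, false_imp_iff, and_true]
  · simp [h, not_lt.mp h]

lemma mem_siblingBox {n k : ℕ} [NeZero n] (v y : Fin k → ZMod n) (p : Fin k) :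
    y ∈ siblingBox v p ↔ y p ≠ v p ∧ y p ≠ 0 ∧ ∀ j : Fin k, j ≠ p → y j = v j := by
  unfold siblingBox
  rw [Fintype.mem_piFinset]
  constructor
  · intro h
    refine ⟨?_, ?_, fun j hj => ?_⟩
    · have := h p
      simp at this
      tauto
    · have := h p
      simp at this
      tauto
    · simpa [hj] using h j
  · rintro ⟨h1, h2, h3⟩ j
    split_ifs with hj
    · subst hj
      simp [h1, h2]
    · simp [h3 j hj]

lemma card_tailBox {n k : ℕ} [NeZero n] (v : Fin k → ZMod n) {m : ℕ} (hm : m ≤ k) :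
    (tailBox v m).card = (n - 1) ^ m := by
  have h : ∀ j : Fin k, (if (j : ℕ) < k - m then {v j} else
      (Finset.univ : Finset (ZMod n)).erase 0).card = if (j : ℕ) < k - m then 1 else n - 1 := by
    intro j
    split_ifs <;> simp [Finset.card_erase_of_mem, ZMod.card]
  rw [tailBox, Fintype.card_piFinset, Finset.prod_congr rfl fun j _ => h j,
    Fin.prod_univ_eq_prod_range (fun j => if j < k - m then 1 else n - 1) k]
  obtain ⟨a, rfl⟩ := Nat.exists_eq_add_of_le' hm
  rw [Nat.add_sub_cancel, Finset.prod_range_add, Finset.prod_eq_one]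
  · simp
  · intro j hj
    simp [Finset.mem_range.mp hj]

lemma card_siblingBox {n k : ℕ} [NeZero n] (v : Fin k → ZMod n) {p : Fin k} (hp : v p ≠ 0) :
    (siblingBox v p).card = n - 2 := by
  have h : ∀ j : Fin k, (if j = p then ((Finset.univ : Finset (ZMod n)).erase 0).erase (v j) else
      {v j}).card = if j = p then n - 2 else 1 := by
    intro j
    split_ifs with hj
    · subst hj
      rw [Finset.card_erase_of_mem (by simp [hp]), Finset.card_erase_of_mem (by simp),
        Finset.card_univ, ZMod.card]
      omega
    · simp
  rw [siblingBox, Fintype.card_piFinset, Finset.prod_congr rfl fun j _ => h j]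
  simp

/-- The neighbours of a vertex whose last nonzero coordinate `p` is not the last coordinate. -/
lemma hierGraph_neighborSet_subroot {n k : ℕ} [NeZero n] (v : Fin k → ZMod n) (p : Fin k)
    (hpk : (p : ℕ) + 2 ≤ k) (hvp : v p ≠ 0) (hvz : ∀ j : Fin k, p < j → v j = 0) :
    (hierGraph n k).neighborSet v =
      ↑((Finset.Icc 1 (k - (p + 1))).biUnion (tailBox v) ∪ siblingBox v p) := by
  -- the last coordinate, at which `v` vanishes
  have hlast : v ⟨k - 1, by omega⟩ = 0 := hvz _ (Fin.lt_def.mpr (by simp; omega))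
  have hz : ∀ y : Fin k → ZMod n, y ≠ v → (∀ j : Fin k, (j : ℕ) + 1 < k → y j = v j) →
      y ∈ tailBox v 1 := by
    intro y hne h
    rw [mem_tailBox]
    refine ⟨fun j hj => h j (by omega), fun j hj h0 => hne ?_⟩
    funext l
    by_cases hl : (l : ℕ) + 1 < k
    · exact h l hl
    · rw [hvz l (Fin.lt_def.mpr (by omega)), ← h0]
      congr 1
      ext
      omega
  -- rule (3) at `q` exhibits `q` as the last nonzero coordinate of `v`
  have hq : ∀ q : Fin k, v q ≠ 0 → (∀ j : Fin k, q < j → v j = 0) → q = p := by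
    intro q h1 h2
    rcases lt_trichotomy q p with h | h | h
    · exact absurd (h2 p h) hvp
    · exact h
    · exact absurd (hvz q h) h1
  ext y
  simp only [SimpleGraph.mem_neighborSet, hierGraph, SimpleGraph.fromRel_adj, Finset.coe_union,
    Finset.coe_biUnion, Set.mem_union, Set.mem_iUnion, Finset.mem_coe, Finset.mem_Icc]
  constructor
  · rintro ⟨-, (⟨hne, h⟩ | ⟨a, ha, h1, h2, h3⟩ | ⟨q, hqk, h1, h2, h3, h4, h5⟩) |
      (⟨hne, h⟩ | ⟨a, ha, h1, h2, h3⟩ | ⟨q, hqk, h1, h2, h3, h4, h5⟩)⟩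
    · exact Or.inl ⟨1, by omega, hz y hne.symm fun j hj => (h j hj).symm⟩
    · have hap : (p : ℕ) < a := by
        by_contra hc
        exact hvp (h2 p (not_lt.mp hc))
      refine Or.inl ⟨k - a, by omega, ?_⟩
      rw [mem_tailBox, Nat.sub_sub_self (by omega)]
      exact ⟨fun j hj => (h1 j hj).symm, h3⟩
    · obtain rfl := hq q h2 fun j hj => (h5 j hj).1
      refine Or.inr ?_
      rw [mem_siblingBox]
      refine ⟨h4.symm, h3, fun j hj => ?_⟩
      rcases lt_or_gt_of_ne hj with h | h
      · exact (h1 j h).symm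
      · rw [(h5 j h).1, (h5 j h).2]
    · exact Or.inl ⟨1, by omega, hz y hne h⟩
    · exact absurd hlast (h3 _ (by simp; omega))
    · obtain rfl := hq q h3 fun j hj => (h5 j hj).2
      refine Or.inr ?_
      rw [mem_siblingBox]
      refine ⟨h4, h2, fun j hj => ?_⟩
      rcases lt_or_gt_of_ne hj with h | h
      · exact h1 j h
      · rw [(h5 j h).1, (h5 j h).2]
  · rintro (⟨m, ⟨hm1, hm2⟩, hy⟩ | hy)
    · rw [mem_tailBox] at hy
      have hne : v ≠ y := by
        rintro rfl
        exact hy.2 _ (by simp; omega) hlast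
      refine ⟨hne, Or.inl ?_⟩
      obtain rfl | hm := eq_or_lt_of_le hm1
      · exact Or.inl ⟨hne, fun j hj => (hy.1 j (by omega)).symm⟩
      · exact Or.inr (Or.inl ⟨k - m, by omega, fun j hj => (hy.1 j hj).symm,
          fun j hj => hvz j (Fin.lt_def.mpr (by omega)), hy.2⟩)
    · rw [mem_siblingBox] at hy
      obtain ⟨h1, h2, h3⟩ := hy
      refine ⟨fun h => h1 (by rw [h]), Or.inl (Or.inr (Or.inr ⟨p, hpk,
        fun j hj => (h3 j hj.ne).symm, hvp, h2, h1.symm, fun j hj => ⟨hvz j hj, ?_⟩⟩))⟩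
      rw [h3 j hj.ne', hvz j hj]

/-- Boxes with different numbers of free coordinates are disjoint: the first coordinate freed by
the larger one is `0` throughout the smaller one. -/
lemma disjoint_tailBox {n k : ℕ} [NeZero n] (v : Fin k → ZMod n) {i m m' : ℕ}
    (hvz : ∀ j : Fin k, i ≤ (j : ℕ) → v j = 0) (hik : i < k) (hm' : m' ≤ k - i) (h : m < m') :
    Disjoint (tailBox v m) (tailBox v m') := by
  rw [Finset.disjoint_left]
  intro y hy hy'
  rw [mem_tailBox] at hy hy'
  have hj : k - m' < k := by omega
  refine hy'.2 ⟨k - m', hj⟩ le_rfl ?_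
  rw [hy.1 ⟨k - m', hj⟩ (by simp; omega), hvz ⟨k - m', hj⟩ (by simp; omega)]

/-- a vertex `v = x_1…x_i 0…0` with `x_i ≠ 0` and `1 ≤ i ≤ k-1`
(the root of a subgraph copy of `H_{n,k-i}`) has degree
`∑_{j=1}^{k-i} (n-1)^j + (n-2)` in `H_{n,k}`. -/
theorem hierGraph_degree_subroot (n k : ℕ) (hn : 2 ≤ n) (i : ℕ) (hi1 : 1 ≤ i)
    (hik : i + 1 ≤ k) (v : Fin k → ZMod n)
    (hvi : v ⟨i - 1, by omega⟩ ≠ 0)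
    (hvz : ∀ j : Fin k, i ≤ (j : ℕ) → v j = 0) :
    vdeg (hierGraph n k) v = (∑ j ∈ Finset.Icc 1 (k - i), (n - 1) ^ j) + (n - 2) := by
  have : NeZero n := ⟨by omega⟩
  have hp : i - 1 < k := by omega
  rw [vdeg, hierGraph_neighborSet_subroot v ⟨i - 1, hp⟩ (by simp; omega) hvi
    (fun j hj => hvz j (by have := Fin.lt_def.mp hj; simp at this; omega)),
    Set.ncard_coe_finset, Nat.sub_add_cancel hi1, Finset.card_union_of_disjoint,
    card_siblingBox v hvi, Finset.card_biUnion]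
  · congr 1
    refine Finset.sum_congr rfl fun m hm => card_tailBox v ?_
    have := (Finset.mem_Icc.mp hm).2
    omega
  · intro m hm m' hm' hne
    rw [Finset.mem_coe, Finset.mem_Icc] at hm hm'
    rcases lt_or_gt_of_ne hne with h | h
    · exact disjoint_tailBox v hvz hik hm'.2 h
    · exact (disjoint_tailBox v hvz hik hm.2 h).symm
  -- the last coordinate is nonzero on each tail box, but `0` on the sibling box
  · rw [Finset.disjoint_left]
    intro y hy hy'
    obtain ⟨m, hm, hy⟩ := Finset.mem_biUnion.mp hy
    rw [Finset.mem_Icc] at hm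
    rw [mem_tailBox] at hy
    rw [mem_siblingBox] at hy'
    have hk : k - 1 < k := by omega
    refine hy.2 ⟨k - 1, hk⟩ (by simp; omega) ?_
    rw [hy'.2.2 ⟨k - 1, hk⟩ (by simp; omega), hvz ⟨k - 1, hk⟩ (by simp; omega)]
end

section
/- Let v be a peripheral vertex of the hierarchical graph H_{n,k}, i.e., a vertex all of whose k coordinates are nonzero. Then the degree of v in H_{n,k} equals n + k − 2. -/
/-- The vertex that agrees with `v` on its first `i` coordinates and is zero afterwards. -/
def truncate {n k : ℕ} (v : Fin k → ZMod n) (i : ℕ) : Fin k → ZMod n :=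
  fun j => if (j : ℕ) < i then v j else 0

theorem rule1_symm {n k : ℕ} {x y : Fin k → ZMod n} (h : rule1 x y) : rule1 y x :=
  ⟨h.1.symm, fun j hj => (h.2 j hj).symm⟩

theorem rule1_iff_update {n m : ℕ} (v w : Fin (m + 1) → ZMod n) :
    rule1 v w ↔ ∃ a ≠ v (Fin.last m), Function.update v (Fin.last m) a = w := by
  constructor
  · rintro ⟨hne, h⟩
    have hw : Function.update v (Fin.last m) (w (Fin.last m)) = w := by
      funext j
      rcases eq_or_ne j (Fin.last m) with rfl | hj
      · simp
      · rw [Function.update_of_ne hj]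
        have := Fin.val_lt_last hj
        exact h j (by omega)
    refine ⟨w (Fin.last m), fun h' => hne ?_, hw⟩
    rw [h', Function.update_eq_self] at hw
    exact hw
  · rintro ⟨a, ha, rfl⟩
    refine ⟨fun h => ha ?_, fun j hj => ?_⟩
    · simpa using (congrFun h (Fin.last m)).symm
    · rw [Function.update_of_ne]
      rintro rfl
      simp at hj

theorem rule2_iff_truncate {n m : ℕ} (v w : Fin (m + 1) → ZMod n) (hv : ∀ j, v j ≠ 0) :
    rule2 w v ↔ ∃ i < m, truncate v i = w := by
  constructor
  · rintro ⟨i, hi, h1, h2, -⟩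
    refine ⟨i, by omega, funext fun j => ?_⟩
    unfold truncate
    split_ifs with hj
    · exact (h1 j hj).symm
    · exact (h2 j (by omega)).symm
  · rintro ⟨i, hi, rfl⟩
    refine ⟨i, by omega, fun j hj => ?_, fun j hj => ?_, fun j _ => hv j⟩
    · simp [truncate, hj]
    · simp [truncate, hj]

theorem not_rule2_of_forall_ne_zero {n k : ℕ} {v w : Fin k → ZMod n} (hv : ∀ j, v j ≠ 0) :
    ¬ rule2 v w := by
  rintro ⟨i, hi, -, h, -⟩
  exact hv ⟨i, by omega⟩ (h _ le_rfl)

/-- Both vertices in rule (3) end in a zero. -/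
theorem rule3_exists_zero {n k : ℕ} {x y : Fin k → ZMod n} (h : rule3 x y) :
    ∃ j, x j = 0 ∧ y j = 0 := by
  obtain ⟨p, hp, -, -, -, -, h⟩ := h
  exact ⟨⟨p + 1, by omega⟩, h _ (Fin.lt_def.2 (by simp))⟩

theorem hierGraph_adj_iff_of_peripheral {n k : ℕ} (v w : Fin k → ZMod n) (hv : ∀ j, v j ≠ 0) :
    (hierGraph n k).Adj v w ↔ rule1 v w ∨ rule2 w v := by
  rw [hierGraph, SimpleGraph.fromRel_adj]
  constructor
  · rintro ⟨-, (h | h | h) | (h | h | h)⟩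
    · exact Or.inl h
    · exact absurd h (not_rule2_of_forall_ne_zero hv)
    · obtain ⟨j, hj, -⟩ := rule3_exists_zero h
      exact absurd hj (hv j)
    · exact Or.inl (rule1_symm h)
    · exact Or.inr h
    · obtain ⟨j, -, hj⟩ := rule3_exists_zero h
      exact absurd hj (hv j)
  · rintro (h | h)
    · exact ⟨h.1, Or.inl (Or.inl h)⟩
    · refine ⟨?_, Or.inr (Or.inr (Or.inl h))⟩
      rintro rfl
      exact not_rule2_of_forall_ne_zero hv h

theorem truncate_injOn {n m : ℕ} (v : Fin (m + 1) → ZMod n) (hv : ∀ j, v j ≠ 0) :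
    Set.InjOn (truncate v) (Set.Iio m) := by
  -- If `i < i'`, the two truncations differ at coordinate `i`.
  have key : ∀ i i' : ℕ, i < i' → i < m → truncate v i ≠ truncate v i' := by
    intro i i' hlt hi h
    have := congrFun h ⟨i, by omega⟩
    simp only [truncate, lt_irrefl, if_false, hlt, if_true] at this
    exact hv _ this.symm
  intro i hi i' hi' h
  rcases lt_trichotomy i i' with hlt | heq | hlt
  · exact absurd h (key i i' hlt hi)
  · exact heq
  · exact absurd h.symm (key i' i hlt hi')

/-- a peripheral vertex of `H_{n,k}` (all coordinates nonzero) has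
degree `n + k - 2`. -/
theorem hierGraph_degree_peripheral (n k : ℕ) (hn : 2 ≤ n) (hk : 1 ≤ k)
    (v : Fin k → ZMod n) (hv : ∀ j : Fin k, v j ≠ 0) :
    vdeg (hierGraph n k) v = n + k - 2 := by
  obtain ⟨m, rfl⟩ : ∃ m, k = m + 1 := ⟨k - 1, by omega⟩
  have : NeZero n := ⟨by omega⟩
  have hset : (hierGraph n (m + 1)).neighborSet v =
      Function.update v (Fin.last m) '' {v (Fin.last m)}ᶜ ∪ truncate v '' Set.Iio m := by
    ext w
    rw [SimpleGraph.mem_neighborSet, hierGraph_adj_iff_of_peripheral v w hv,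
      rule1_iff_update, rule2_iff_truncate v w hv]
    rfl
  have hdisj : Disjoint (Function.update v (Fin.last m) '' {v (Fin.last m)}ᶜ)
      (truncate v '' Set.Iio m) := by
    rw [Set.disjoint_left]
    rintro _ ⟨a, -, rfl⟩ ⟨i, hi, h⟩
    have hi : i < m := hi
    -- Compare at the next-to-last coordinate, which exists because `0 ≤ i < m`.
    have h' := congrFun h ⟨m - 1, by omega⟩
    rw [Function.update_of_ne (by simp [Fin.ext_iff]; omega), truncate,
      if_neg (by simp; omega)] at h'
    exact hv _ h'.symm
  rw [vdeg, hset, Set.ncard_union_eq hdisj (Set.toFinite _) ((Set.finite_Iio m).image _),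
    Set.ncard_image_of_injective _ (Function.update_injective v _),
    (truncate_injOn v hv).ncard_image, Set.ncard_compl, Set.ncard_singleton,
    Nat.card_zmod, ← Finset.coe_Iio, Set.ncard_coe_finset, Nat.card_Iio]
  omega
end
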